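/- arXiv:math/0601361 — 8 statements merged into one kernel-verified Lean document; each statement's English description precedes it below -/
import Mathlib

section
/- For every n ≥ 4, the distinguishing number of the n-dimensional hypercube satisfies D(Q_n) = 2. -/
/-- A permutation of the vertices is an automorphism of `G` iff it preserves adjacency. -/
def IsAuto {V : Type*} (G : SimpleGraph V) (π : Equiv.Perm V) : Prop :=
  ∀ v w, G.Adj (π v) (π w) ↔ G.Adj v w

/-- A coloring `c : V → Fin r` is distinguishing if no nontrivial automorphism preserves it. -/
def IsDistinguishing {V : Type*} (G : SimpleGraph V) {r : ℕ} (c : V → Fin r) : Prop :=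
  ∀ π : Equiv.Perm V, IsAuto G π → (∀ v, c (π v) = c v) → π = 1

/-- The distinguishing number `D(G)`: the least `r` admitting a distinguishing `r`-coloring. -/
noncomputable def distNum {V : Type*} (G : SimpleGraph V) : ℕ :=
  sInf {r : ℕ | ∃ c : V → Fin r, IsDistinguishing G c}

/-- The `n`-dimensional hypercube: vertices are `{0,1}^n`, adjacent iff they differ in
exactly one coordinate. -/
def Q (n : ℕ) : SimpleGraph (Fin n → Bool) where
  Adj v w := (Finset.univ.filter fun i => v i ≠ w i).card = 1
  symm := by
    constructor
    intro v w h
    rw [show (Finset.univ.filter fun i => w i ≠ v i) = (Finset.univ.filter fun i => v i ≠ w i) from by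
      apply Finset.filter_congr; intro i _; simp [ne_comm]]
    exact h
  loopless := by constructor; intro v h; simp at h

namespace Cube

lemma hd_step {n : ℕ} (x a b : Fin n → Bool) (i : Fin n) (hab : ∀ j, j ≠ i → a j = b j)
    (hi : a i ≠ b i) (hx : x i = a i) : hammingDist x b = hammingDist x a + 1 := by
  unfold hammingDist
  have : (Finset.univ.filter fun j => x j ≠ b j)
      = insert i (Finset.univ.filter fun j => x j ≠ a j) := by
    ext j
    simp only [Finset.mem_filter, Finset.mem_univ, true_and, Finset.mem_insert]
    by_cases h : j = i
    · subst h; simp [hx, hi]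
    · simp [h, hab j h]
  rw [this, Finset.card_insert_of_notMem]
  simp [hx]

lemma adj_iff {n : ℕ} (v w : Fin n → Bool) : (Q n).Adj v w ↔ hammingDist v w = 1 := Iff.rfl

lemma iso_le {n : ℕ} (π : Equiv.Perm (Fin n → Bool)) (h : IsAuto (Q n) π) (k : ℕ) :
    ∀ v w, hammingDist v w = k → hammingDist (π v) (π w) ≤ k := by
  induction k with
  | zero => intro v w hvw; rw [hammingDist_eq_zero] at hvw; simp [hvw]
  | succ k ih =>
    intro v w hvw
    have hne : v ≠ w := by rintro rfl; simp at hvw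
    obtain ⟨i, hi⟩ := Function.ne_iff.1 hne
    have h1 := hd_step v (Function.update w i (v i)) w i
      (fun j hj => by simp [hj]) (by simpa using hi) (by simp)
    have h2 := hd_step w w (Function.update w i (v i)) i
      (fun j hj => by simp [hj]) (by simpa using hi.symm) rfl
    have h3 := ih v (Function.update w i (v i)) (by omega)
    have h4 : hammingDist (π w) (π (Function.update w i (v i))) = 1 :=
      (h _ _).2 (by rw [adj_iff]; simpa using h2)
    have h5 := hammingDist_triangle (π v) (π (Function.update w i (v i))) (π w)
    rw [hammingDist_comm (π w)] at h4
    omega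

lemma iso {n : ℕ} (π : Equiv.Perm (Fin n → Bool)) (h : IsAuto (Q n) π) (v w : Fin n → Bool) :
    hammingDist (π v) (π w) = hammingDist v w := by
  apply le_antisymm (iso_le π h _ _ _ rfl)
  have h' : IsAuto (Q n) π.symm := fun v w => by
    rw [← h]; simp
  simpa using iso_le π.symm h' _ (π v) (π w) rfl

def p (n k : ℕ) : Fin n → Bool := fun i => decide (i.1 < k)

def u (n : ℕ) : Fin n → Bool := fun i => decide (i.1 = 0 ∨ i.1 + 1 = n)

lemma card_aux (n : ℕ) (P : ℕ → Prop) [DecidablePred P] :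
    (Finset.univ.filter fun i : Fin n => P i.1).card = ((Finset.range n).filter P).card := by
  rw [← Finset.card_map Fin.valEmbedding]
  congr 1
  ext j
  simp only [Finset.mem_map, Finset.mem_filter, Finset.mem_univ, true_and, Finset.mem_range,
    Fin.valEmbedding_apply]
  constructor
  · rintro ⟨a, ha, rfl⟩; exact ⟨a.2, ha⟩
  · rintro ⟨h1, h2⟩; exact ⟨⟨j, h1⟩, h2, rfl⟩

lemma hd_aux (n : ℕ) (P R : ℕ → Prop) [DecidablePred P] [DecidablePred R] (s : Finset ℕ)
    (h : ∀ i, i ∈ s ↔ i < n ∧ ¬ (P i ↔ R i)) :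
    hammingDist (fun i : Fin n => decide (P i.1)) (fun i : Fin n => decide (R i.1)) = s.card := by
  have := card_aux n (fun i => ¬ (P i ↔ R i))
  unfold hammingDist
  simp only [ne_eq, decide_eq_decide]
  rw [this]
  congr 1
  ext i
  simp [h]

lemma hd_pp (n j k : ℕ) (hjk : j ≤ k) (hk : k ≤ n) : hammingDist (p n j) (p n k) = k - j := by
  rw [← Nat.card_Ico]
  refine hd_aux n (fun i => i < j) (fun i => i < k) _ ?_
  intro i
  rw [Finset.mem_Ico]
  omega

lemma hd_pp' (n j k : ℕ) (hj : j ≤ n) (hk : k ≤ n) :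
    hammingDist (p n j) (p n k) = (k - j) + (j - k) := by
  rcases le_total j k with h | h
  · rw [hd_pp n j k h hk]; omega
  · rw [hammingDist_comm, hd_pp n k j h hj]; omega

lemma hd_u0 (n : ℕ) (hn : 4 ≤ n) : hammingDist (u n) (p n 0) = 2 := by
  have : ({0, n - 1} : Finset ℕ).card = 2 := Finset.card_pair (by omega)
  rw [← this]
  refine hd_aux n (fun i => i = 0 ∨ i + 1 = n) (fun i => i < 0) _ ?_
  intro i
  simp only [Finset.mem_insert, Finset.mem_singleton]
  omega

lemma hd_un (n : ℕ) (hn : 4 ≤ n) : hammingDist (u n) (p n n) = n - 2 := by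
  have : (Finset.Ico 1 (n-1)).card = n - 2 := by rw [Nat.card_Ico]; omega
  rw [← this]
  refine hd_aux n (fun i => i = 0 ∨ i + 1 = n) (fun i => i < n) _ ?_
  intro i
  rw [Finset.mem_Ico]
  omega

lemma hd_uk (n k : ℕ) (hn : 4 ≤ n) (hk : 1 ≤ k) (hkn : k < n) :
    hammingDist (u n) (p n k) = k := by
  have : (insert (n-1) (Finset.Ico 1 k)).card = k := by
    rw [Finset.card_insert_of_notMem, Nat.card_Ico]
    · omega
    · rw [Finset.mem_Ico]; omega
  conv_rhs => rw [← this]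
  refine hd_aux n (fun i => i = 0 ∨ i + 1 = n) (fun i => i < k) _ ?_
  intro i
  rw [Finset.mem_insert, Finset.mem_Ico]
  omega

lemma determined (n : ℕ) (x y : Fin n → Bool)
    (h : ∀ k ≤ n, hammingDist x (p n k) = hammingDist y (p n k)) : x = y := by
  have key : ∀ x : Fin n → Bool, ∀ i : Fin n,
      x i = true ↔ hammingDist x (p n i.1) = hammingDist x (p n (i.1+1)) + 1 := by
    intro x i
    have hne : ∀ j : Fin n, j ≠ i → p n i.1 j = p n (i.1+1) j := by
      intro j hj
      have : j.1 ≠ i.1 := fun h => hj (Fin.ext h)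
      simp only [p, decide_eq_decide]
      omega
    have ha : p n i.1 i = false := by simp [p]
    have hb : p n (i.1+1) i = true := by simp [p]
    cases hx : x i
    · have := hd_step x (p n i.1) (p n (i.1+1)) i hne (by simp [ha, hb]) (by rw [hx, ha])
      simp; omega
    · have := hd_step x (p n (i.1+1)) (p n i.1) i (fun j hj => (hne j hj).symm)
        (by simp [ha, hb]) (by rw [hx, hb])
      simp; omega
  funext i
  rw [Bool.eq_iff_iff, key x i, key y i, h _ i.2.le, h _ i.2]

def S (n : ℕ) (x : Fin n → Bool) : Prop := x = u n ∨ ∃ k ≤ n, x = p n k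

lemma fix_p (n : ℕ) (hn : 4 ≤ n) (π : Equiv.Perm (Fin n → Bool)) (h : IsAuto (Q n) π)
    (hS : ∀ x, S n x → S n (π x)) : ∀ k ≤ n, π (p n k) = p n k := by
  have hd := iso π h
  have hP : ∀ k ≤ n, S n (π (p n k)) := fun k hk => hS _ (Or.inr ⟨k, hk, rfl⟩)
  have hU : S n (π (u n)) := hS _ (Or.inl rfl)
  have ubd : ∀ k ≤ n, hammingDist (u n) (p n k) < n := by
    intro k hk
    rcases Nat.eq_zero_or_pos k with rfl | h0
    · rw [hd_u0 n hn]; omega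
    rcases hk.lt_or_eq with h1 | rfl
    · rwa [hd_uk n k hn h0 h1]
    · rw [hd_un _ hn]; omega
  have h0n : hammingDist (π (p n 0)) (π (p n n)) = n := by
    rw [hd, hd_pp n 0 n (by omega) le_rfl]; omega
  have hends : (π (p n 0) = p n 0 ∧ π (p n n) = p n n) ∨
      (π (p n 0) = p n n ∧ π (p n n) = p n 0) := by
    rcases hP 0 (by omega) with ha | ⟨a, ha, hae⟩ <;> rcases hP n le_rfl with hb | ⟨b, hb, hbe⟩
    · rw [ha, hb, hammingDist_self] at h0n; omega
    · rw [ha, hbe] at h0n; have := ubd b hb; omega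
    · rw [hae, hb, hammingDist_comm] at h0n; have := ubd a ha; omega
    · rw [hae, hbe, hd_pp' n a b ha hb] at h0n
      rcases (by omega : (a = 0 ∧ b = n) ∨ (a = n ∧ b = 0)) with ⟨rfl, rfl⟩ | ⟨rfl, rfl⟩
      · exact Or.inl ⟨hae, hbe⟩
      · exact Or.inr ⟨hae, hbe⟩
  rcases hends with ⟨e0, en⟩ | ⟨e0, en⟩
  · have hk : ∀ k ≤ n, π (p n k) = p n k ∨ (k = 2 ∧ π (p n k) = u n) := by
      intro k hk
      have hdk := hd (p n k) (p n 0)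
      rw [e0, hd_pp' n k 0 hk (by omega)] at hdk
      rcases hP k hk with ha | ⟨a, ha, hae⟩
      · rw [ha, hd_u0 n hn] at hdk
        exact Or.inr ⟨by omega, ha⟩
      · rw [hae, hd_pp' n a 0 ha (by omega)] at hdk
        obtain rfl : a = k := by omega
        exact Or.inl hae
    intro k hkn
    rcases hk k hkn with h1 | ⟨rfl, h1⟩
    · exact h1
    · exfalso
      have h3 : π (p n 3) = p n 3 := by
        rcases hk 3 (by omega) with h | ⟨h, _⟩
        · exact h
        · omega
      have := hd (p n 2) (p n 3)
      rw [h1, h3, hd_uk n 3 hn (by omega) (by omega), hd_pp n 2 3 (by omega) (by omega)] at this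
      omega
  · exfalso
    have e1 : π (p n 1) = p n (n-1) := by
      have hdk := hd (p n 1) (p n 0)
      rw [e0, hd_pp' n 1 0 (by omega) (by omega)] at hdk
      rcases hP 1 (by omega) with ha | ⟨a, ha, hae⟩
      · rw [ha, hd_un n hn] at hdk; omega
      · rw [hae, hd_pp' n a n ha le_rfl] at hdk
        obtain rfl : a = n - 1 := by omega
        exact hae
    have key : ∀ x, S n (π x) → hammingDist x (p n 1) = 1 → hammingDist x (p n n) = n - 2 →
        π x = p n (n-2) := by
      intro x hx h1 h2
      rw [← hd, e1] at h1
      rw [← hd, en] at h2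
      rcases hx with ha | ⟨a, ha, hae⟩
      · rw [ha, hd_uk n (n-1) hn (by omega) (by omega)] at h1; omega
      · rw [hae, hd_pp' n a 0 ha (by omega)] at h2
        obtain rfl : a = n - 2 := by omega
        exact hae
    have k1 := key (u n) hU (hd_uk n 1 hn le_rfl (by omega)) (hd_un n hn)
    have k2 := key (p n 2) (hP 2 (by omega)) (by rw [hd_pp' n 2 1 (by omega) (by omega)])
      (hd_pp n 2 n (by omega) le_rfl)
    have e : u n = p n 2 := π.injective (k1.trans k2.symm)
    have := hd_uk n 3 hn (by omega) (by omega)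
    rw [e, hd_pp n 2 3 (by omega) (by omega)] at this
    omega

open Classical in
lemma exists_two (n : ℕ) (hn : 4 ≤ n) : ∃ c : (Fin n → Bool) → Fin 2, IsDistinguishing (Q n) c := by
  refine ⟨fun x => if S n x then 1 else 0, ?_⟩
  intro π h hc
  have hS : ∀ x, S n x → S n (π x) := by
    intro x hx
    have := hc x
    by_contra hne
    simp [hx, hne] at this
  have hfix := fix_p n hn π h hS
  ext1 x
  apply determined n
  intro k hk
  conv_lhs => rw [← hfix k hk]
  exact iso π h x (p n k)

def flip (n : ℕ) : Equiv.Perm (Fin n → Bool) where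
  toFun x := fun i => !(x i)
  invFun x := fun i => !(x i)
  left_inv x := by simp
  right_inv x := by simp

lemma flip_auto (n : ℕ) : IsAuto (Q n) (flip n) := by
  intro v w
  rw [adj_iff, adj_iff]
  simp [flip, hammingDist]

end Cube

theorem stmt_2 (n : ℕ) (hn : 4 ≤ n) : distNum (Q n) = 2 := by
  have h2 := Cube.exists_two n hn
  apply le_antisymm
  · exact Nat.sInf_le h2
  · apply le_csInf ⟨2, h2⟩
    rintro r ⟨c, hc⟩
    by_contra hlt
    have : r ≤ 1 := by omega
    have hsub : Subsingleton (Fin r) := Fin.subsingleton_iff_le_one.2 this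
    have h1 := hc (Cube.flip n) (Cube.flip_auto n) (fun v => Subsingleton.elim _ _)
    have h3 := congrFun (congrArg (fun e => e (fun _ => true)) h1) (⟨0, by omega⟩ : Fin n)
    simp [Cube.flip] at h3
end

section
/- Let n and p be integers with 2 < p < n−1 and p even. A permutation π of {0,1}^n is an automorphism of Q_n^p if and only if it is an automorphism of Q_n^2; that is, Aut(Q_n^p) and Aut(Q_n^2) are the same subgroup of the permutation group on the vertex set. -/
/-- The p-th power of a graph `G`: distinct vertices are adjacent iff their
distance in `G` satisfies `0 < d_G(v,w) ≤ p` (in particular they are reachable). -/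
def gpow {V : Type*} (G : SimpleGraph V) (p : ℕ) : SimpleGraph V where
  Adj v w := v ≠ w ∧ G.Reachable v w ∧ G.dist v w ≤ p
  symm := ⟨fun v w h => ⟨h.1.symm, h.2.1.symm, by rw [SimpleGraph.dist_comm]; exact h.2.2⟩⟩
  loopless := ⟨fun v h => h.1 rfl⟩

namespace HC

variable {n : ℕ}

/-- Hamming distance off coordinate `i`. -/
def r (i : Fin n) (x z : Fin n → Bool) : ℕ :=
  ((Finset.univ.erase i).filter fun j => x j ≠ z j).card

lemma hd_eq (i : Fin n) (x z : Fin n → Bool) :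
    hammingDist x z = r i x z + if x i ≠ z i then 1 else 0 := by
  unfold hammingDist r
  conv_lhs => rw [← Finset.insert_erase (Finset.mem_univ i)]
  rw [Finset.filter_insert]
  split_ifs with h
  · rw [Finset.card_insert_of_notMem (by simp)]
  · simp

lemma r_comm (i : Fin n) (x z : Fin n → Bool) : r i x z = r i z x := by
  unfold r
  simp only [ne_comm]

lemma r_upd (i : Fin n) (x z : Fin n → Bool) (b : Bool) :
    r i x (Function.update z i b) = r i x z := by
  unfold r
  congr 1
  apply Finset.filter_congr
  intro j hj
  rw [Function.update_of_ne (Finset.ne_of_mem_erase hj)]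

lemma r_upd' (i : Fin n) (x z : Fin n → Bool) (b : Bool) :
    r i (Function.update x i b) z = r i x z := by
  rw [r_comm, r_upd, r_comm]

lemma hd_upd (i : Fin n) (x z : Fin n → Bool) (b : Bool) :
    hammingDist x (Function.update z i b) = r i x z + if x i ≠ b then 1 else 0 := by
  rw [hd_eq i, r_upd, Function.update_self]

lemma hd_upd' (i : Fin n) (x z : Fin n → Bool) (b : Bool) :
    hammingDist (Function.update x i b) z = r i x z + if b ≠ z i then 1 else 0 := by
  rw [hd_eq i, r_upd', Function.update_self]

/-- Intersection of balls. -/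
def S (p : ℕ) (x y : Fin n → Bool) : Finset (Fin n → Bool) :=
  Finset.univ.filter fun z => hammingDist x z ≤ p ∧ hammingDist y z ≤ p

lemma mem_S {p : ℕ} {x y z : Fin n → Bool} :
    z ∈ S p x y ↔ hammingDist x z ≤ p ∧ hammingDist y z ≤ p := by
  simp [S]

def phi (p : ℕ) (i : Fin n) (x y z : Fin n → Bool) : Fin n → Bool :=
  if hammingDist y z ≤ p then z else Function.update z i (x i)

lemma phi_aux {p : ℕ} {i : Fin n} {x y z : Fin n → Bool} (hi : y i = x i)
    (hz : z ∈ S p x (Function.update y i (!x i))) (h : ¬ hammingDist y z ≤ p) :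
    z i = (!x i) ∧ r i y z = p ∧ r i x z + 1 ≤ p := by
  rw [mem_S, hd_upd', hd_eq i] at hz
  rw [hd_eq i, hi] at h
  by_cases hc : x i = z i
  · simp [hc] at h hz; omega
  · have : z i = !x i := by revert hc; cases x i <;> cases z i <;> simp
    simp [this] at h hz ⊢; omega

lemma phi_maps {p : ℕ} {i : Fin n} {x y : Fin n → Bool} (hi : y i = x i) :
    ∀ z ∈ S p x (Function.update y i (!x i)), phi p i x y z ∈ S p x y := by
  intro z hz
  unfold phi
  split_ifs with h
  · exact mem_S.2 ⟨(mem_S.1 hz).1, h⟩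
  · obtain ⟨h1, h2, h3⟩ := phi_aux hi hz h
    rw [mem_S, hd_upd, hd_upd]
    simp [hi]; omega

lemma phi_inj {p : ℕ} {i : Fin n} {x y : Fin n → Bool} (hi : y i = x i) :
    Set.InjOn (phi p i x y) (S p x (Function.update y i (!x i))) := by
  have key : ∀ z w : Fin n → Bool, z ∈ S p x (Function.update y i (!x i)) →
      w ∈ S p x (Function.update y i (!x i)) → ¬ hammingDist y w ≤ p →
      z ≠ Function.update w i (x i) := by
    intro z w hz hw h e
    obtain ⟨h1, h2, h3⟩ := phi_aux hi hw h
    have := (mem_S.1 hz).2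
    rw [e, hd_upd, r_upd'] at this
    simp at this; omega
  intro z hz w hw e
  unfold phi at e
  split_ifs at e with h h' h'
  · exact e
  · exact absurd e (key z w hz hw h')
  · exact absurd e.symm (key w z hw hz h)
  · have a := (phi_aux hi hz h).1
    have b := (phi_aux hi hw h').1
    ext j
    by_cases hj : j = i
    · subst hj; rw [a, b]
    · have := congrFun e j
      rwa [Function.update_of_ne hj, Function.update_of_ne hj] at this

lemma step_le {p : ℕ} {i : Fin n} {x y : Fin n → Bool} (hi : y i = x i) :
    (S p x (Function.update y i (!x i))).card ≤ (S p x y).card :=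
  Finset.card_le_card_of_injOn _ (phi_maps hi) (phi_inj hi)

lemma step_lt {p : ℕ} {i : Fin n} {x y : Fin n → Bool} (hi : y i = x i) (z : Fin n → Bool)
    (hz : z i = x i) (h1 : hammingDist x z = p) (h2 : hammingDist y z = p) :
    (S p x (Function.update y i (!x i))).card < (S p x y).card := by
  classical
  rw [← Finset.card_image_of_injOn (phi_inj hi)]
  apply Finset.card_lt_card
  rw [Finset.ssubset_iff_of_subset]
  · refine ⟨z, mem_S.2 ⟨h1.le, h2.le⟩, ?_⟩
    intro hm
    obtain ⟨w, hw, e⟩ := Finset.mem_image.1 hm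
    unfold phi at e
    split_ifs at e with h
    · subst e
      have := (mem_S.1 hw).2
      rw [hd_upd'] at this
      rw [hd_eq i] at h2
      simp [hz, hi] at this h2; omega
    · obtain ⟨a, b, c⟩ := phi_aux hi hw h
      rw [← e, hd_upd] at h1
      simp at h1; omega
  · intro z hz
    obtain ⟨w, hw, e⟩ := Finset.mem_image.1 hz
    exact e ▸ phi_maps hi w hw

lemma exists_iso {x y x' y' : Fin n → Bool} (h : hammingDist x y = hammingDist x' y') :
    ∃ e : (Fin n → Bool) → (Fin n → Bool), Function.Injective e ∧
      (∀ a b, hammingDist (e a) (e b) = hammingDist a b) ∧ e x = x' ∧ e y = y' := by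
  classical
  have hc : Fintype.card {i // x' i ≠ y' i} = Fintype.card {i // x i ≠ y i} := by
    rw [Fintype.card_subtype, Fintype.card_subtype]; exact h.symm
  let e0 := Fintype.equivOfCardEq hc
  let σ : Equiv.Perm (Fin n) := e0.extendSubtype
  have hσ : ∀ i, x' i ≠ y' i ↔ x (σ i) ≠ y (σ i) := by
    intro i
    constructor
    · intro hi; exact e0.extendSubtype_mem i hi
    · intro hi; by_contra hi'; exact e0.extendSubtype_not_mem i (not_not.2 hi') hi
  have hd : ∀ a b : Fin n → Bool,
      hammingDist (fun i => xor (a (σ i)) (xor (x (σ i)) (x' i)))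
        (fun i => xor (b (σ i)) (xor (x (σ i)) (x' i))) = hammingDist a b := by
    intro a b
    unfold hammingDist
    apply Finset.card_bij (fun i _ => σ i)
    · intro i hi; simpa using hi
    · intro i _ j _ hij; exact σ.injective hij
    · intro j hj; exact ⟨σ.symm j, by simpa using hj, by simp⟩
  refine ⟨fun a i => xor (a (σ i)) (xor (x (σ i)) (x' i)), ?_, hd, ?_, ?_⟩
  · intro a b hab
    have := hd a b
    simp only at hab
    rw [hab, hammingDist_self] at this
    exact hammingDist_eq_zero.1 this.symm
  · funext i; simp
  · funext i
    have := hσ i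
    revert this
    beta_reduce
    generalize σ i = s
    cases x s <;> cases y s <;> cases x' i <;> cases y' i <;> simp

lemma S_card_le {p : ℕ} {x y x' y' : Fin n → Bool} (e : (Fin n → Bool) → (Fin n → Bool))
    (he : Function.Injective e)
    (h : ∀ a b, hammingDist a b ≤ p → hammingDist (e a) (e b) ≤ p) (hx : e x = x') (hy : e y = y') :
    (S p x y).card ≤ (S p x' y').card := by
  apply Finset.card_le_card_of_injOn e _ he.injOn
  intro z hz
  have hz := mem_S.1 hz
  exact mem_S.2 ⟨hx ▸ h _ _ hz.1, hy ▸ h _ _ hz.2⟩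

lemma S_card_dist_le {p : ℕ} {x y x' y' : Fin n → Bool}
    (h : hammingDist x y = hammingDist x' y') : (S p x y).card ≤ (S p x' y').card := by
  obtain ⟨e, h1, h2, h3, h4⟩ := exists_iso h
  exact S_card_le e h1 (fun a b hab => (h2 a b).trans_le hab) h3 h4

lemma exists_ne {x y : Fin n → Bool} (h : 0 < hammingDist x y) : ∃ i, x i ≠ y i := by
  by_contra! hc
  have : x = y := funext hc
  subst this
  simp at h

/-- move one step towards `x` -/
lemma exists_pred {k : ℕ} {x y : Fin n → Bool} (h : hammingDist x y = k + 1) :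
    ∃ i, ∃ y' : Fin n → Bool, y' i = x i ∧ hammingDist x y' = k ∧
      y = Function.update y' i (!x i) := by
  obtain ⟨i, hi⟩ := exists_ne (x := x) (y := y) (by omega)
  refine ⟨i, Function.update y i (x i), by simp, ?_, ?_⟩
  · rw [hd_eq i] at h
    rw [hd_upd]
    simp [hi] at h ⊢; omega
  · have : (!x i) = y i := by revert hi; cases x i <;> cases y i <;> simp
    rw [this]; simp

lemma exists_mid {p : ℕ} (hp : 1 ≤ p) (hn : p + 2 ≤ n) {i : Fin n} {x y : Fin n → Bool}
    (hi : y i = x i) (h : hammingDist x y = 2) :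
    ∃ z : Fin n → Bool, z i = x i ∧ hammingDist x z = p ∧ hammingDist y z = p := by
  classical
  obtain ⟨j, hj⟩ := exists_ne (x := x) (y := y) (by omega)
  have hji : j ≠ i := by rintro rfl; exact hj hi.symm
  set D := Finset.univ.filter (fun l => x l ≠ y l) with hD
  have hDc : D.card = 2 := h
  have hiD : i ∉ D := by simp [hD, hi]
  have hjD : j ∈ D := by simp [hD, hj]
  have hbig : p - 1 ≤ (insert i D)ᶜ.card := by
    rw [Finset.card_compl, Finset.card_insert_of_notMem hiD, hDc, Fintype.card_fin]; omega
  obtain ⟨T, hT, hTc⟩ := Finset.exists_subset_card_eq hbig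
  have hTD : ∀ l ∈ T, l ≠ i ∧ l ∉ D := by
    intro l hl
    have := hT hl
    simpa only [Finset.mem_compl, Finset.mem_insert, not_or] using this
  refine ⟨fun l => if l ∈ insert j T then !x l else x l, ?_, ?_, ?_⟩
  · have : i ∉ insert j T := by
      simp only [Finset.mem_insert, not_or]
      exact ⟨hji.symm, fun hh => (hTD i hh).1 rfl⟩
    simp only [this, if_false]
  · have : (Finset.univ.filter fun l => x l ≠ if l ∈ insert j T then !x l else x l)
        = insert j T := by
      ext l
      simp only [Finset.mem_filter, Finset.mem_univ, true_and]
      split_ifs with hl <;> simp [hl]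
    unfold hammingDist
    rw [this, Finset.card_insert_of_notMem (fun hh => (hTD j hh).2 hjD)]; omega
  · have : (Finset.univ.filter fun l => y l ≠ if l ∈ insert j T then !x l else x l)
        = (D.erase j) ∪ T := by
      ext l
      have h1 := hTD l
      have h2 : l ∈ D ↔ x l ≠ y l := by simp [hD]
      simp only [Finset.mem_filter, Finset.mem_univ, true_and, Finset.mem_union,
        Finset.mem_erase, Finset.mem_insert]
      by_cases hl : l = j
      · subst hl
        have : l ∉ T := fun hh => (hTD l hh).2 hjD
        simp only [this, true_or, if_true]
        revert hj; cases x l <;> cases y l <;> simp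
      · by_cases hlT : l ∈ T
        · have := (h1 hlT).2
          rw [h2] at this
          push Not at this
          simp [hlT, this]
        · simp only [hl, hlT, h2, or_false, if_false]
          simp [hl, eq_comm (a := y l)]
    unfold hammingDist
    rw [this, Finset.card_union_of_disjoint, Finset.card_erase_of_mem hjD]
    · omega
    · rw [Finset.disjoint_left]
      intro l hl hlT
      exact (hTD l hlT).2 (Finset.mem_of_mem_erase hl)

lemma far {p : ℕ} (hp : 1 ≤ p) (hn : p + 2 ≤ n) {a b : Fin n → Bool} (hab : hammingDist a b = 2)
    (k : ℕ) : ∀ x y : Fin n → Bool, hammingDist x y = k + 3 →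
      (S p x y).card < (S p a b).card := by
  induction k with
  | zero =>
    intro x y h
    obtain ⟨i, y', hi, h', rfl⟩ := exists_pred h
    obtain ⟨z, h1, h2, h3⟩ := exists_mid hp hn hi h'
    exact (step_lt hi z h1 h2 h3).trans_le (S_card_dist_le (h'.trans hab.symm))
  | succ k ih =>
    intro x y h
    obtain ⟨i, y', hi, h', rfl⟩ := exists_pred (k := k + 3) (by omega)
    exact (step_le hi).trans_lt (ih x y' h')

lemma near {p : ℕ} (m : ℕ) : ∀ {a b x y : Fin n → Bool}, hammingDist x y ≤ m →
    hammingDist a b = m → (S p a b).card ≤ (S p x y).card := by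
  induction m with
  | zero => intro a b x y h h'; exact S_card_dist_le (by omega)
  | succ m ih =>
    intro a b x y h h'
    by_cases he : hammingDist x y = m + 1
    · exact S_card_dist_le (by omega)
    · obtain ⟨i, y', hi, h'', rfl⟩ := exists_pred h'
      exact (step_le hi).trans (ih (by omega) h'')

lemma char2 {p : ℕ} (hp : 1 ≤ p) (hn : p + 2 ≤ n) {a b : Fin n → Bool}
    (hab : hammingDist a b = 2) (x y : Fin n → Bool) :
    hammingDist x y ≤ 2 ↔ (S p a b).card ≤ (S p x y).card := by
  constructor
  · intro h; exact near 2 h hab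
  · intro h
    by_contra hc
    have := far hp hn hab (hammingDist x y - 3) x y (by omega)
    omega

lemma exists_two (hn : 2 ≤ n) : ∃ a b : Fin n → Bool, hammingDist a b = 2 := by
  classical
  obtain ⟨T, -, hT⟩ := Finset.exists_subset_card_eq
    (s := (Finset.univ : Finset (Fin n))) (n := 2) (by simpa using hn)
  refine ⟨fun _ => false, fun i => decide (i ∈ T), ?_⟩
  unfold hammingDist
  rw [← hT]
  congr 1
  ext i
  simp

lemma adj_iff (v w : Fin n → Bool) : (Q n).Adj v w ↔ hammingDist v w = 1 := Iff.rfl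

lemma walk_le {v w : Fin n → Bool} (W : (Q n).Walk v w) : hammingDist v w ≤ W.length := by
  induction W with
  | nil => simp
  | cons h _ ih =>
    rw [adj_iff] at h
    rw [SimpleGraph.Walk.length_cons]
    have := hammingDist_triangle _ _ _ |>.trans (add_le_add h.le ih)
    omega

lemma exists_walk (k : ℕ) : ∀ x y : Fin n → Bool, hammingDist x y = k →
    ∃ W : (Q n).Walk x y, W.length = k := by
  induction k with
  | zero =>
    intro x y h
    obtain rfl := hammingDist_eq_zero.1 h
    exact ⟨.nil, rfl⟩
  | succ k ih =>
    intro x y h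
    obtain ⟨i, y', hi, h', rfl⟩ := exists_pred h
    obtain ⟨W, hW⟩ := ih x y' h'
    have : (Q n).Adj y' (Function.update y' i (!x i)) := by
      rw [adj_iff, hd_upd]
      simp [hi, r]
    exact ⟨W.concat this, by simp [hW]⟩

lemma gpow_adj (p : ℕ) (v w : Fin n → Bool) :
    (gpow (Q n) p).Adj v w ↔ v ≠ w ∧ hammingDist v w ≤ p := by
  change (v ≠ w ∧ (Q n).Reachable v w ∧ (Q n).dist v w ≤ p) ↔ _
  obtain ⟨W, hW⟩ := exists_walk _ v w rfl
  have hr : (Q n).Reachable v w := ⟨W⟩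
  obtain ⟨W', hW'⟩ := hr.exists_walk_length_eq_dist
  have h1 := walk_le W'
  have h2 := SimpleGraph.dist_le W
  have : (Q n).dist v w = hammingDist v w := by omega
  rw [this]
  simp [hr]

lemma auto_iff (p : ℕ) (π : Equiv.Perm (Fin n → Bool)) :
    IsAuto (gpow (Q n) p) π ↔
      ∀ v w, hammingDist (π v) (π w) ≤ p ↔ hammingDist v w ≤ p := by
  unfold IsAuto
  refine forall₂_congr fun v w => ?_
  rw [gpow_adj, gpow_adj]
  by_cases h : v = w
  · subst h; simp
  · simp [h]

lemma forward {π : (Fin n → Bool) → (Fin n → Bool)}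
    (h : ∀ v w, hammingDist v w ≤ 2 → hammingDist (π v) (π w) ≤ 2) (m : ℕ) :
    ∀ v w, hammingDist v w ≤ m + m → hammingDist (π v) (π w) ≤ m + m := by
  induction m with
  | zero =>
    intro v w hvw
    have : v = w := hammingDist_eq_zero.1 (by omega)
    subst this; simp
  | succ m ih =>
    intro v w hvw
    by_cases hs : hammingDist v w ≤ 2
    · exact (h v w hs).trans (by omega)
    · obtain ⟨i, w1, hi, hw1, rfl⟩ := exists_pred (k := hammingDist v w - 1) (x := v) (y := w) (by omega)
      obtain ⟨j, w2, hj, hw2, rfl⟩ := exists_pred (k := hammingDist v w1 - 1) (x := v) (y := w1) (by omega)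
      have h1 := ih v w2 (by omega)
      set w1 := Function.update w2 j (!v j) with hw1def
      have d1 : hammingDist w2 w1 ≤ 1 := by rw [hw1def, hd_upd]; simp [r]; split_ifs <;> simp
      have d2 : hammingDist w1 (Function.update w1 i (!v i)) ≤ 1 := by
        rw [hd_upd]; simp [r]; split_ifs <;> simp
      have h2 := h w2 (Function.update w1 i (!v i))
        ((hammingDist_triangle _ w1 _).trans (by omega))
      have := hammingDist_triangle (π v) (π w2) (π (Function.update w1 i (!v i)))
      omega

end HC

theorem stmt_4 (n p : ℕ) (h1 : 2 < p) (h2 : p < n - 1) (heven : Even p) :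
    ∀ π : Equiv.Perm (Fin n → Bool), IsAuto (gpow (Q n) p) π ↔ IsAuto (gpow (Q n) 2) π := by
  intro π
  rw [HC.auto_iff, HC.auto_iff]
  constructor
  · intro h v w
    obtain ⟨a, b, hab⟩ := HC.exists_two (n := n) (by omega)
    rw [HC.char2 (p := p) (by omega) (by omega) hab, HC.char2 (p := p) (by omega) (by omega) hab]
    have e1 : (HC.S p v w).card ≤ (HC.S p (π v) (π w)).card :=
      HC.S_card_le π π.injective (fun a b hh => (h a b).2 hh) rfl rfl
    have e2 : (HC.S p (π v) (π w)).card ≤ (HC.S p v w).card :=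
      HC.S_card_le π.symm π.symm.injective
        (fun a b hh => (h (π.symm a) (π.symm b)).1 (by simpa using hh)) (by simp) (by simp)
    omega
  · intro h v w
    obtain ⟨m, rfl⟩ := heven
    constructor
    · intro hh
      have := HC.forward (π := π.symm)
        (fun a b hh => (h (π.symm a) (π.symm b)).1 (by simpa using hh)) m _ _ hh
      simpa using this
    · exact HC.forward (fun a b hh => (h a b).2 hh) m v w
end

section
/- For all integers n and p with 2 < p < n−1, the distinguishing number of the p-th power of the n-dimensional hypercube satisfies D(Q_n^p) = 2. -/
namespace PCube

abbrev V (n : ℕ) := Fin n → Bool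

lemma hd_eq {n : ℕ} (x y : V n) :
    hammingDist x y = (Finset.univ.filter fun i => x i ≠ y i).card := rfl

lemma step {n : ℕ} (x w w' : V n) (j : Fin n) (h : ∀ k, k ≠ j → w' k = w k)
    (h1 : x j = w j) (h2 : x j ≠ w' j) : hammingDist x w' = hammingDist x w + 1 := by
  rw [hd_eq, hd_eq]
  have : (Finset.univ.filter fun i => x i ≠ w' i)
      = insert j (Finset.univ.filter fun i => x i ≠ w i) := by
    ext k
    by_cases hk : k = j
    · subst hk; simp [h2]
    · simp [hk, h k hk]
  rw [this, Finset.card_insert_of_notMem (by simp [h1])]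

def flip {n : ℕ} (w : V n) (j : Fin n) : V n := Function.update w j (!w j)

lemma flip_same {n : ℕ} (w : V n) (j : Fin n) : flip w j j = !w j := by simp [flip]

lemma flip_ne {n : ℕ} (w : V n) (j k : Fin n) (h : k ≠ j) : flip w j k = w k := by
  simp [flip, h]

lemma flip_flip {n : ℕ} (w : V n) (j : Fin n) : flip (flip w j) j = w := by
  simp [flip]

lemma hd_flip_eq {n : ℕ} (x w : V n) (j : Fin n) (h : x j = w j) :
    hammingDist x (flip w j) = hammingDist x w + 1 :=
  step x w _ j (fun k hk => flip_ne w j k hk) h (by rw [flip_same, h]; simp)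

lemma hd_flip_ne {n : ℕ} (x w : V n) (j : Fin n) (h : x j ≠ w j) :
    hammingDist x (flip w j) + 1 = hammingDist x w := by
  have := hd_flip_eq x (flip w j) j (by rw [flip_same]; revert h; cases x j <;> cases w j <;> simp)
  rw [flip_flip] at this
  exact this.symm

lemma exists_ne {n : ℕ} (x w : V n) (h : x ≠ w) : ∃ j, x j ≠ w j := by
  by_contra hc
  push Not at hc
  exact h (funext hc)

/-! ### distance in the cube -/

lemma walk_bound {n : ℕ} {x y : V n} (q : (Q n).Walk x y) : hammingDist x y ≤ q.length := by
  induction q with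
  | nil => simp
  | @cons u v w h q ih =>
    have h' : hammingDist u v = 1 := h
    have := hammingDist_triangle u v w
    simp only [SimpleGraph.Walk.length_cons]
    omega

lemma exists_walk {n : ℕ} (m : ℕ) : ∀ (x y : V n), hammingDist x y = m →
    ∃ q : (Q n).Walk x y, q.length = m := by
  induction m with
  | zero =>
    intro x y h
    have := hammingDist_eq_zero.1 h
    subst this
    exact ⟨SimpleGraph.Walk.nil, rfl⟩
  | succ m ih =>
    intro x y h
    have hne : x ≠ y := by
      intro e; subst e; simp at h
    obtain ⟨j, hj⟩ := exists_ne x y hne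
    have h1 := hd_flip_ne y x j hj.symm
    have h2 := hd_flip_eq x x j rfl
    rw [hammingDist_self] at h2
    rw [hammingDist_comm] at h
    obtain ⟨q, hq⟩ := ih (flip x j) y (by rw [hammingDist_comm]; omega)
    have ha : (Q n).Adj x (flip x j) := h2
    exact ⟨SimpleGraph.Walk.cons ha q, by simp [hq]⟩

lemma dist_le_iff {n p : ℕ} (x y : V n) :
    (gpow (Q n) p).Adj x y ↔ x ≠ y ∧ hammingDist x y ≤ p := by
  constructor
  · rintro ⟨h1, h2, h3⟩
    refine ⟨h1, ?_⟩
    obtain ⟨q, hq⟩ := h2.exists_walk_length_eq_dist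
    have := walk_bound q
    omega
  · rintro ⟨h1, h2⟩
    obtain ⟨q, hq⟩ := exists_walk _ x y rfl
    exact ⟨h1, ⟨q⟩, (SimpleGraph.dist_le q).trans (by omega)⟩

lemma auto_iff {n p : ℕ} {π : Equiv.Perm (V n)} (h : IsAuto (gpow (Q n) p) π) (x y : V n) :
    hammingDist (π x) (π y) ≤ p ↔ hammingDist x y ≤ p := by
  by_cases e : x = y
  · subst e; simp
  · have := h x y
    rw [dist_le_iff, dist_le_iff] at this
    have e' : π x ≠ π y := fun c => e (π.injective c)
    tauto

/-! ### counting common neighbours -/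

def F {n : ℕ} (p : ℕ) (x w : V n) : Finset (V n) :=
  Finset.univ.filter fun y => hammingDist x y ≤ p ∧ hammingDist w y ≤ p

lemma F_le {n p : ℕ} (T : V n → V n) (hT : Function.Injective T)
    (h : ∀ x y, hammingDist x y ≤ p → hammingDist (T x) (T y) ≤ p) (x w : V n) :
    (F p x w).card ≤ (F p (T x) (T w)).card := by
  apply Finset.card_le_card_of_injOn T _ hT.injOn
  intro y hy
  simp only [F, Finset.coe_filter, Finset.mem_univ, true_and, Set.mem_ofPred_eq] at hy ⊢
  exact ⟨h _ _ hy.1, h _ _ hy.2⟩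

lemma F_inv_le {n p : ℕ} (x w x' w' : V n) (h : hammingDist x w = hammingDist x' w') :
    (F p x w).card ≤ (F p x' w').card := by
  have hc : Fintype.card {i // x i ≠ w i} = Fintype.card {i // x' i ≠ w' i} := by
    rw [Fintype.card_subtype, Fintype.card_subtype]; exact h
  let e := Fintype.equivOfCardEq hc
  let σ := e.extendSubtype
  have hσ : ∀ i, (x i ≠ w i ↔ x' (σ i) ≠ w' (σ i)) := fun i =>
    ⟨fun hi => e.extendSubtype_mem i hi, fun hi => by
      by_contra hn
      exact e.extendSubtype_not_mem i (not_not.2 hn) hi⟩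
  let T : V n → V n := fun y k => xor (y (σ.symm k)) (xor (x (σ.symm k)) (x' k))
  have iso : ∀ a b, hammingDist (T a) (T b) = hammingDist a b := by
    intro a b
    rw [hd_eq, hd_eq]
    apply Finset.card_bij' (fun k _ => σ.symm k) (fun k _ => σ k) <;> simp [T]
  have inj : Function.Injective T := by
    intro a b hab
    rw [← hammingDist_eq_zero, ← iso, hab, hammingDist_self]
  have hx : T x = x' := by
    funext k; simp [T]
  have hw : T w = w' := by
    funext k
    have := hσ (σ.symm k)
    rw [Equiv.apply_symm_apply] at this
    simp only [T]
    revert this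
    cases x (σ.symm k) <;> cases w (σ.symm k) <;> cases x' k <;> cases w' k <;> simp
  have := F_le (p := p) T inj (fun a b hab => by rw [iso]; exact hab) x w
  rwa [hx, hw] at this

lemma F_inv {n p : ℕ} (x w x' w' : V n) (h : hammingDist x w = hammingDist x' w') :
    (F p x w).card = (F p x' w').card :=
  le_antisymm (F_inv_le _ _ _ _ h) (F_inv_le _ _ _ _ h.symm)

/-- the injection used for comparing. -/
def Phi {n : ℕ} (p : ℕ) (w : V n) (j : Fin n) (y : V n) : V n :=
  if hammingDist w y ≤ p then y else flip y j

lemma key {n p : ℕ} (x w : V n) (j : Fin n) (hj : x j = w j) (y : V n)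
    (hy : y ∈ F p x (flip w j)) : hammingDist w y ≤ p ∨
      (y j ≠ w j ∧ hammingDist w y = p + 1 ∧ hammingDist w (flip y j) = p ∧
        hammingDist x (flip y j) + 1 = hammingDist x y) := by
  simp only [F, Finset.mem_filter, Finset.mem_univ, true_and] at hy
  by_cases hc : hammingDist w y ≤ p
  · exact Or.inl hc
  · right
    by_cases hyj : y j = w j
    · have := hd_flip_eq y w j hyj
      rw [hammingDist_comm y, hammingDist_comm y] at this
      omega
    · have h1 := hd_flip_ne y w j hyj
      rw [hammingDist_comm y, hammingDist_comm y] at h1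
      have h2 := hd_flip_ne w y j (Ne.symm hyj)
      have h3 := hd_flip_ne x y j (by rw [hj]; exact Ne.symm hyj)
      refine ⟨hyj, ?_, ?_, h3⟩ <;> omega

lemma Phi_inj {n p : ℕ} (x w : V n) (j : Fin n) (hj : x j = w j) :
    Set.InjOn (Phi p w j) (F p x (flip w j) : Set (V n)) := by
  have aux : ∀ y ∈ F p x (flip w j), ∀ y' ∈ F p x (flip w j), hammingDist w y ≤ p →
      ¬ hammingDist w y' ≤ p → y ≠ flip y' j := by
    intro y hy y' hy' h h' e
    rcases key x w j hj y' hy' with k | ⟨k1, k2, k3, k4⟩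
    · exact h' k
    · subst e
      simp only [F, Finset.mem_filter, Finset.mem_univ, true_and] at hy
      have := hd_flip_eq (flip y' j) w j (by
        rw [flip_same]; revert k1; cases y' j <;> cases w j <;> simp)
      rw [hammingDist_comm _ w, hammingDist_comm _ (flip w j)] at this
      omega
  intro y hy y' hy' h
  simp only [Finset.mem_coe] at hy hy'
  unfold Phi at h
  split_ifs at h with a b b
  · exact h
  · exact absurd h (aux y hy y' hy' a b)
  · exact absurd h.symm (aux y' hy' y hy b a)
  · rw [← flip_flip y j, h, flip_flip]

lemma Phi_mem {n p : ℕ} (x w : V n) (j : Fin n) (hj : x j = w j) (y : V n)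
    (hy : y ∈ F p x (flip w j)) : Phi p w j y ∈ F p x w := by
  have hk := key x w j hj y hy
  simp only [F, Finset.mem_filter, Finset.mem_univ, true_and] at hy ⊢
  unfold Phi
  split_ifs with a
  · exact ⟨hy.1, a⟩
  · rcases hk with k | ⟨k1, k2, k3, k4⟩
    · exact absurd k a
    · constructor <;> omega

lemma F_mono {n p : ℕ} (x w : V n) (j : Fin n) (hj : x j = w j) :
    (F p x (flip w j)).card ≤ (F p x w).card :=
  Finset.card_le_card_of_injOn (Phi p w j) (fun y hy => Phi_mem x w j hj y hy) (Phi_inj x w j hj)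

lemma F_strict {n p : ℕ} (x w : V n) (j : Fin n) (hj : x j = w j) (y0 : V n)
    (h0 : y0 j = x j) (h1 : hammingDist x y0 = p) (h2 : hammingDist w y0 = p) :
    (F p x (flip w j)).card < (F p x w).card := by
  have hm : y0 ∈ F p x w := by simp [F, h1, h2]
  have : (F p x (flip w j)).card ≤ ((F p x w).erase y0).card := by
    apply Finset.card_le_card_of_injOn (Phi p w j) _ (Phi_inj x w j hj)
    intro y hy
    simp only [Finset.mem_coe] at hy
    simp only [Finset.coe_erase, Set.mem_sdiff, Finset.mem_coe, Set.mem_singleton_iff]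
    refine ⟨Phi_mem x w j hj y hy, ?_⟩
    have hk := key x w j hj y hy
    simp only [F, Finset.mem_filter, Finset.mem_univ, true_and] at hy
    unfold Phi
    split_ifs with a
    · rintro rfl
      have := hd_flip_eq y w j (by rw [h0, hj])
      rw [hammingDist_comm y, hammingDist_comm y] at this
      omega
    · rintro rfl
      rcases hk with k | ⟨k1, k2, k3, k4⟩
      · exact absurd k a
      · omega
  have := Finset.card_erase_lt_of_mem hm
  omega

/-! ### the chain of vertices -/

def v (n i : ℕ) : V n := fun k => decide (k.val < i)

def z (n : ℕ) : V n := fun k => decide (n ≤ k.val + 2)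

lemma v_flip {n i : ℕ} (h : i < n) : flip (v n i) ⟨i, h⟩ = v n (i + 1) := by
  funext k
  by_cases hk : k = ⟨i, h⟩
  · subst hk; simp [flip_same, v]
  · rw [flip_ne _ _ _ hk]
    have : k.val ≠ i := fun c => hk (Fin.ext c)
    simp only [v, decide_eq_decide]; omega

lemma step_false {n i : ℕ} (x : V n) (h : i < n) (hx : x ⟨i, h⟩ = false) :
    hammingDist x (v n (i + 1)) = hammingDist x (v n i) + 1 := by
  rw [← v_flip h]; exact hd_flip_eq _ _ _ (by simp [hx, v])

lemma step_true {n i : ℕ} (x : V n) (h : i < n) (hx : x ⟨i, h⟩ = true) :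
    hammingDist x (v n (i + 1)) + 1 = hammingDist x (v n i) := by
  rw [← v_flip h]; exact hd_flip_ne _ _ _ (by simp [hx, v])

lemma d_v0 {n : ℕ} (i : ℕ) (h : i ≤ n) : hammingDist (v n 0) (v n i) = i := by
  induction i with
  | zero => simp
  | succ i ih =>
    rw [step_false _ (by omega) (by simp [v]), ih (by omega)]

def G (n p k : ℕ) : ℕ := (F p (v n 0) (v n k)).card

lemma F_eq_G {n p : ℕ} (x w : V n) : (F p x w).card = G n p (hammingDist x w) := by
  apply F_inv
  rw [d_v0]
  simpa using hammingDist_le_card_fintype (x := x) (y := w)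

lemma G_step {n p k : ℕ} (h : k < n) : G n p (k + 1) ≤ G n p k := by
  unfold G
  rw [← v_flip h]
  exact F_mono _ _ _ (by simp [v])

lemma G_anti {n p k l : ℕ} (hkl : k ≤ l) (h : l ≤ n) : G n p l ≤ G n p k := by
  induction l, hkl using Nat.le_induction with
  | base => exact le_rfl
  | succ l hl ih => exact (G_step (by omega)).trans (ih (by omega))

lemma G_strict {n p : ℕ} (hp : 1 ≤ p) (h : p + 2 ≤ n) : G n p 3 < G n p 2 := by
  unfold G
  rw [← v_flip (show 2 < n by omega)]
  have e0 : ∀ y : V n, hammingDist y (v n 0) = hammingDist (v n 0) y :=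
    fun y => hammingDist_comm _ _
  -- the witness is `v (p+2)` with coordinates 1, 2 flipped
  set a : V n := flip (v n (p + 2)) ⟨1, by omega⟩ with ha
  have a1 : hammingDist (v n 0) a + 1 = p + 2 := by
    rw [ha, hd_flip_ne _ _ _ (by simp [v]), d_v0 _ h]
  have a2 : hammingDist (v n 0) (flip a ⟨2, by omega⟩) + 1 = hammingDist (v n 0) a :=
    hd_flip_ne _ _ _ (by rw [ha, flip_ne _ _ _ (by simp)]; simp [v]; omega)
  have a3 : hammingDist (v n 0) (flip a ⟨2, by omega⟩) = p := by omega
  refine F_strict _ _ _ (by simp [v]) (flip a ⟨2, by omega⟩) ?_ a3 ?_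
  · rw [flip_same, ha, flip_ne _ _ _ (by simp)]; simp [v]; omega
  · have s1 := step_true (flip a ⟨2, by omega⟩) (show 0 < n by omega)
      (by rw [flip_ne _ _ _ (by simp), ha, flip_ne _ _ _ (by simp)]; simp [v])
    have s2 := step_false (flip a ⟨2, by omega⟩) (show 1 < n by omega)
      (by rw [flip_ne _ _ _ (by simp), ha, flip_same]; simp [v])
    rw [hammingDist_comm, s2, s1, e0, a3]

lemma le_two_iff {n p : ℕ} (hp : 1 ≤ p) (h : p + 2 ≤ n) (x w : V n) :
    hammingDist x w ≤ 2 ↔ G n p 2 ≤ (F p x w).card := by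
  rw [F_eq_G]
  have hn : hammingDist x w ≤ n := by
    simpa using hammingDist_le_card_fintype (x := x) (y := w)
  constructor
  · intro hd; exact G_anti hd (by omega)
  · intro hG
    by_contra hc
    have := G_anti (p := p) (show 3 ≤ hammingDist x w by omega) hn
    have := G_strict hp h
    omega

lemma auto_two {n p : ℕ} (hp : 1 ≤ p) (h : p + 2 ≤ n) (π : V n → V n)
    (hinj : Function.Injective π)
    (hπ : ∀ x y, hammingDist x y ≤ p → hammingDist (π x) (π y) ≤ p) (x w : V n)
    (hd : hammingDist x w ≤ 2) : hammingDist (π x) (π w) ≤ 2 := by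
  rw [le_two_iff hp h] at hd ⊢
  exact hd.trans (F_le π hinj hπ x w)

lemma between {n : ℕ} (x y : V n) : ∃ u, hammingDist x u ≤ 1 ∧
    hammingDist u y = hammingDist x y - 1 := by
  by_cases e : x = y
  · subst e; exact ⟨x, by simp⟩
  · obtain ⟨j, hj⟩ := exists_ne x y e
    have h1 := hd_flip_ne y x j hj.symm
    have h2 := hd_flip_eq x x j rfl
    rw [hammingDist_self] at h2
    refine ⟨flip x j, by omega, ?_⟩
    rw [hammingDist_comm, hammingDist_comm x]; omega

lemma auto_even {n : ℕ} (π : V n → V n)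
    (hπ : ∀ x y, hammingDist x y ≤ 2 → hammingDist (π x) (π y) ≤ 2) (m : ℕ) :
    ∀ x y, hammingDist x y ≤ 2 * m → hammingDist (π x) (π y) ≤ 2 * m := by
  induction m with
  | zero =>
    intro x y h
    have : x = y := hammingDist_eq_zero.1 (by omega)
    subst this; simp
  | succ m ih =>
    intro x y h
    obtain ⟨u, hu1, hu2⟩ := between x y
    obtain ⟨u', hu1', hu2'⟩ := between u y
    have t := hammingDist_triangle x u u'
    have a := hπ x u' (by omega)
    have b := ih u' y (by omega)
    have c := hammingDist_triangle (π x) (π u') (π y)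
    omega

/-! ### fixing the chain forces the identity -/

lemma fix_all {n : ℕ} (hn : 5 ≤ n) (π : V n → V n)
    (hπ : ∀ x y, hammingDist x y ≤ 2 → hammingDist (π x) (π y) ≤ 2)
    (hc : ∀ x i, i ≤ n → (hammingDist (π x) (v n i) + 1) / 2 = (hammingDist x (v n i) + 1) / 2)
    (x : V n) : π x = x := by
  have st : ∀ (y : V n) (i : ℕ) (h : i < n),
      (y ⟨i, h⟩ = false ∧ hammingDist y (v n (i + 1)) = hammingDist y (v n i) + 1) ∨
      (y ⟨i, h⟩ = true ∧ hammingDist y (v n (i + 1)) + 1 = hammingDist y (v n i)) := by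
    intro y i h
    cases hy : y ⟨i, h⟩
    · exact Or.inl ⟨rfl, step_false y h hy⟩
    · exact Or.inr ⟨rfl, step_true y h hy⟩
  have main : ∀ x, π x ≠ x → (∀ i, π x i ≠ x i) ∧ x ⟨0, by omega⟩ ≠ x ⟨1, by omega⟩ := by
    intro x hx
    by_cases h0 : hammingDist (π x) (v n 0) = hammingDist x (v n 0)
    · exfalso
      apply hx
      have all : ∀ i, i ≤ n → hammingDist (π x) (v n i) = hammingDist x (v n i) := by
        intro i
        induction i with
        | zero => intro _; exact h0
        | succ i ih =>
          intro hi
          have a := ih (by omega)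
          have b := hc x (i + 1) hi
          rcases st x i (by omega) with ⟨_, s⟩ | ⟨_, s⟩ <;>
          rcases st (π x) i (by omega) with ⟨_, t⟩ | ⟨_, t⟩ <;> omega
      funext ⟨i, hi⟩
      have a := all i hi.le
      have b := all (i + 1) hi
      rcases st x i hi with ⟨e, s⟩ | ⟨e, s⟩ <;>
      rcases st (π x) i hi with ⟨f, t⟩ | ⟨f, t⟩ <;> first | omega | (rw [e, f])
    · have all : ∀ i, i ≤ n → (hammingDist (π x) (v n i) + hammingDist x (v n i)) % 2 = 1 := by
        intro i
        induction i with
        | zero =>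
          intro _
          have := hc x 0 (by omega)
          omega
        | succ i ih =>
          intro hi
          have a := ih (by omega)
          rcases st x i (by omega) with ⟨_, s⟩ | ⟨_, s⟩ <;>
          rcases st (π x) i (by omega) with ⟨_, t⟩ | ⟨_, t⟩ <;> omega
      constructor
      · rintro ⟨i, hi⟩
        have a := all i hi.le
        have b := hc x i hi.le
        have c := hc x (i + 1) hi
        rcases st x i hi with ⟨e, s⟩ | ⟨e, s⟩ <;>
        rcases st (π x) i hi with ⟨f, t⟩ | ⟨f, t⟩ <;> first | (rw [e, f]; decide) | omega
      · have a := all 0 (by omega)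
        have b := hc x 0 (by omega)
        have c := hc x 1 (by omega)
        have d := hc x 2 (by omega)
        rcases st x 0 (by omega) with ⟨e, s⟩ | ⟨e, s⟩ <;>
        rcases st (π x) 0 (by omega) with ⟨f, t⟩ | ⟨f, t⟩ <;>
        rcases st x 1 (by omega) with ⟨e', s'⟩ | ⟨e', s'⟩ <;>
        rcases st (π x) 1 (by omega) with ⟨f', t'⟩ | ⟨f', t'⟩ <;>
        simp only [Nat.zero_add, Nat.reduceAdd] at * <;>
        first | (rw [e, e']; decide) | omega
  by_contra hx
  obtain ⟨m1, m2⟩ := main x hx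
  set w := flip x ⟨0, by omega⟩ with hw
  have xw : hammingDist x w = 1 := by rw [hw, hd_flip_eq _ _ _ rfl]; simp
  have w0 : w ⟨0, by omega⟩ = !x ⟨0, by omega⟩ := flip_same _ _
  have w1 : w ⟨1, by omega⟩ = x ⟨1, by omega⟩ := flip_ne _ _ _ (by simp)
  have hpw : π w = w := by
    by_contra hc'
    have := (main w hc').2
    rw [w0, w1] at this
    revert this m2
    cases x ⟨0, by omega⟩ <;> cases x ⟨1, by omega⟩ <;> simp
  have h2 := hπ x w (by omega)
  rw [hpw] at h2
  have h3 := hammingDist_triangle (π x) w x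
  rw [hammingDist_comm w x, xw] at h3
  have h4 : hammingDist (π x) x = n := by
    rw [hd_eq, Finset.filter_true_of_mem (fun i _ => m1 i)]; simp
  omega

/-! ### distances among the coloured vertices -/

lemma three_le {n : ℕ} (x y : V n) (a b c : ℕ) (ha : a < n) (hb : b < n) (hcn : c < n)
    (hab : a ≠ b) (hac : a ≠ c) (hbc : b ≠ c)
    (h1 : x ⟨a, ha⟩ ≠ y ⟨a, ha⟩) (h2 : x ⟨b, hb⟩ ≠ y ⟨b, hb⟩) (h3 : x ⟨c, hcn⟩ ≠ y ⟨c, hcn⟩) :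
    3 ≤ hammingDist x y := by
  have : ({⟨a, ha⟩, ⟨b, hb⟩, ⟨c, hcn⟩} : Finset (Fin n)).card = 3 := by
    rw [Finset.card_eq_three]
    exact ⟨_, _, _, by simpa using hab, by simpa using hac, by simpa using hbc, rfl⟩
  rw [← this, hd_eq]
  apply Finset.card_le_card
  intro k hk
  simp only [Finset.mem_insert, Finset.mem_singleton] at hk
  simp only [Finset.mem_filter, Finset.mem_univ, true_and]
  rcases hk with rfl | rfl | rfl <;> assumption

lemma le_two {n : ℕ} (x y : V n) (a b : ℕ)
    (h : ∀ k : Fin n, x k ≠ y k → k.val = a ∨ k.val = b) : hammingDist x y ≤ 2 := by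
  rw [hd_eq]
  calc _ ≤ ({a, b} : Finset ℕ).card := by
        apply Finset.card_le_card_of_injOn Fin.val _ Fin.val_injective.injOn
        intro k hk
        simp only [Finset.coe_filter, Finset.mem_univ, true_and, Set.mem_ofPred_eq] at hk
        simpa using h k hk
    _ ≤ 2 := Finset.card_le_two

lemma vv_le {n i j : ℕ} (h : i ≤ j) (h' : j ≤ i + 2) : hammingDist (v n i) (v n j) ≤ 2 := by
  apply le_two _ _ i (i + 1)
  intro k hk
  simp only [v, ne_eq, decide_eq_decide] at hk
  omega

lemma vv_ge {n i j : ℕ} (h : i + 3 ≤ j) (hj : j ≤ n) : 3 ≤ hammingDist (v n i) (v n j) := by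
  apply three_le _ _ i (i + 1) (i + 2) (by omega) (by omega) (by omega) (by omega) (by omega)
    (by omega) <;> simp only [v, ne_eq, decide_eq_decide] <;> omega

lemma vv_iff {n i j : ℕ} (hi : i ≤ n) (hj : j ≤ n) :
    hammingDist (v n i) (v n j) ≤ 2 ↔ i ≤ j + 2 ∧ j ≤ i + 2 := by
  constructor
  · intro h
    by_contra hc
    rcases le_total i j with hij | hij
    · have := vv_ge (n := n) (show i + 3 ≤ j by omega) hj; omega
    · have := vv_ge (n := n) (show j + 3 ≤ i by omega) hi
      rw [hammingDist_comm] at this; omega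
  · rintro ⟨h1, h2⟩
    rcases le_total i j with hij | hij
    · exact vv_le hij h2
    · rw [hammingDist_comm]; exact vv_le hij h1

lemma zv_zero {n : ℕ} : hammingDist (z n) (v n 0) ≤ 2 := by
  apply le_two _ _ (n - 2) (n - 1)
  intro k hk
  simp only [z, v, ne_eq, decide_eq_decide] at hk
  omega

lemma zv_pos {n i : ℕ} (hn : 5 ≤ n) (h1 : 1 ≤ i) (hi : i ≤ n) :
    3 ≤ hammingDist (z n) (v n i) := by
  by_cases h : i ≤ n - 2
  · apply three_le _ _ 0 (n - 2) (n - 1) (by omega) (by omega) (by omega) (by omega) (by omega)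
      (by omega) <;> simp only [z, v, ne_eq, decide_eq_decide] <;> omega
  · apply three_le _ _ 0 1 2 (by omega) (by omega) (by omega) (by omega) (by omega)
      (by omega) <;> simp only [z, v, ne_eq, decide_eq_decide] <;> omega

lemma v_inj {n i j : ℕ} (hi : i ≤ n) (hj : j ≤ n) (h : v n i = v n j) : i = j := by
  rw [← d_v0 i hi, ← d_v0 j hj, h]

lemma z_ne {n i : ℕ} (hn : 5 ≤ n) (hi : i ≤ n) : z n ≠ v n i := by
  intro h
  rcases Nat.eq_zero_or_pos i with rfl | hp
  · have := congrFun h ⟨n - 1, by omega⟩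
    simp only [z, v, decide_eq_decide] at this
    omega
  · have := zv_pos hn hp hi
    rw [h, hammingDist_self] at this
    omega

def S (n : ℕ) (x : V n) : Prop := x = z n ∨ ∃ i, i ≤ n ∧ x = v n i

lemma fix_S {n : ℕ} (hn : 5 ≤ n) (π : Equiv.Perm (V n))
    (hπ : ∀ x y, hammingDist (π x) (π y) ≤ 2 ↔ hammingDist x y ≤ 2)
    (hS : ∀ x, S n (π x) ↔ S n x) : ∀ i, i ≤ n → π (v n i) = v n i := by
  have hSv : ∀ i, i ≤ n → S n (v n i) := fun i hi => Or.inr ⟨i, hi, rfl⟩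
  have nbz : ∀ y, S n y → y ≠ z n → hammingDist (z n) y ≤ 2 → y = v n 0 := by
    rintro y (rfl | ⟨i, hi, rfl⟩) h1 h2
    · exact absurd rfl h1
    · rcases Nat.eq_zero_or_pos i with rfl | hp
      · rfl
      · have := zv_pos hn hp hi; omega
  -- the preimage of a coloured vertex
  have pre : ∀ y, S n y → S n (π.symm y) := by
    intro y hy; rw [← hS, Equiv.apply_symm_apply]; exact hy
  have hz : π (z n) = z n := by
    rcases (hS (z n)).2 (Or.inl rfl) with h | ⟨i, hi, h⟩
    · exact h
    · exfalso
      have P : ∀ j, j ≤ n → j ≠ i → i ≤ j + 2 → j ≤ i + 2 → π (v n 0) = v n j := by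
        intro j hj hji h1 h2
        have := nbz (π.symm (v n j)) (pre _ (hSv j hj)) (by
          intro e
          rw [Equiv.symm_apply_eq, h] at e
          exact hji (v_inj hj hi e)) (by
          rw [← hπ, h, Equiv.apply_symm_apply, vv_iff hi hj]; exact ⟨h1, h2⟩)
        rw [← this, Equiv.apply_symm_apply]
      by_cases hb : i + 2 ≤ n
      · have a := P (i + 1) (by omega) (by omega) (by omega) (by omega)
        have b := P (i + 2) (by omega) (by omega) (by omega) (by omega)
        have := v_inj (by omega) (by omega) (a.symm.trans b)
        omega
      · have a := P (i - 1) (by omega) (by omega) (by omega) (by omega)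
        have b := P (i - 2) (by omega) (by omega) (by omega) (by omega)
        have := v_inj (by omega) (by omega) (a.symm.trans b)
        omega
  have h0 : π (v n 0) = v n 0 := by
    apply nbz _ ((hS _).2 (hSv 0 (by omega)))
    · intro e
      rw [← hz] at e
      exact z_ne hn (by omega) (π.injective e).symm
    · rw [← hz, hπ]; exact zv_zero
  have idx : ∀ i, i ≤ n → ∃ j, j ≤ n ∧ π (v n i) = v n j := by
    intro i hi
    rcases (hS (v n i)).2 (hSv i hi) with h | h
    · rw [← hz] at h
      exact absurd (π.injective h).symm (z_ne hn hi)
    · exact h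
  have adj : ∀ i j i' j', i ≤ n → j ≤ n → i' ≤ n → j' ≤ n → π (v n i) = v n i' →
      π (v n j) = v n j' → ((i' ≤ j' + 2 ∧ j' ≤ i' + 2) ↔ (i ≤ j + 2 ∧ j ≤ i + 2)) := by
    intro i j i' j' hi hj hi' hj' e e'
    rw [← vv_iff hi hj, ← vv_iff hi' hj', ← e, ← e', hπ]
  have neq : ∀ i j i' j', i ≤ n → j ≤ n → i' ≤ n → j' ≤ n → π (v n i) = v n i' →
      π (v n j) = v n j' → (i' = j' ↔ i = j) := by
    intro i j i' j' hi hj hi' hj' e e'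
    constructor
    · rintro rfl
      exact v_inj hi hj (π.injective (e.trans e'.symm))
    · rintro rfl
      exact v_inj hi' hj' (e.symm.trans e')
  have h1 : π (v n 1) = v n 1 := by
    obtain ⟨a, ha, ea⟩ := idx 1 (by omega)
    obtain ⟨b, hb, eb⟩ := idx 2 (by omega)
    obtain ⟨c, hc, ec⟩ := idx 3 (by omega)
    obtain ⟨d, hd, ed⟩ := idx 4 (by omega)
    have q1 := adj 0 1 0 a (by omega) (by omega) (by omega) ha h0 ea
    have q2 := adj 0 2 0 b (by omega) (by omega) (by omega) hb h0 eb
    have q3 := adj 1 3 a c (by omega) (by omega) ha hc ea ec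
    have q4 := adj 2 4 b d (by omega) (by omega) hb hd eb ed
    have q5 := adj 2 3 b c (by omega) (by omega) hb hc eb ec
    have q6 := adj 1 4 a d (by omega) (by omega) ha hd ea ed
    have n1 := neq 0 1 0 a (by omega) (by omega) (by omega) ha h0 ea
    have n2 := neq 0 2 0 b (by omega) (by omega) (by omega) hb h0 eb
    have n3 := neq 1 2 a b (by omega) (by omega) ha hb ea eb
    have n4 := neq 3 4 c d (by omega) (by omega) hc hd ec ed
    have n5 := neq 0 3 0 c (by omega) (by omega) (by omega) hc h0 ec
    have n6 := neq 0 4 0 d (by omega) (by omega) (by omega) hd h0 ed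
    have n7 := neq 2 4 b d (by omega) (by omega) hb hd eb ed
    have n8 := neq 1 4 a d (by omega) (by omega) ha hd ea ed
    have : a = 1 := by omega
    rw [ea, this]
  intro i
  induction i using Nat.strong_induction_on with
  | _ i ih =>
    intro hi
    by_cases hi2 : i < 2
    · interval_cases i
      · exact h0
      · exact h1
    · obtain ⟨a, ha, ea⟩ := idx i hi
      have q := adj (i - 2) i (i - 2) a (by omega) hi (by omega) ha
        (ih _ (by omega) (by omega)) ea
      have r : ¬ a < i := by
        intro hlt
        have := neq a i a a ha hi ha ha (ih a hlt ha) ea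
        omega
      have : a = i := by omega
      rw [ea, this]

lemma rigid {n p : ℕ} (hp : 3 ≤ p) (h : p + 2 ≤ n) (π : Equiv.Perm (V n))
    (hπ : ∀ x y, hammingDist (π x) (π y) ≤ p ↔ hammingDist x y ≤ p)
    (hS : ∀ x, S n (π x) ↔ S n x) : π = 1 := by
  have hπ' : ∀ x y, hammingDist x y ≤ p → hammingDist (π.symm x) (π.symm y) ≤ p := by
    intro x y hxy
    rw [← hπ]; simpa using hxy
  have f2 := auto_two (by omega) h π π.injective (fun x y => (hπ x y).2)
  have b2 := auto_two (by omega) h π.symm π.symm.injective hπ'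
  have fe := auto_even π f2
  have be := auto_even π.symm b2
  have fix := fix_S (by omega) π (fun x y => ⟨fun hh => by simpa using b2 _ _ hh, f2 x y⟩) hS
  ext1 x
  refine fix_all (by omega) π f2 ?_ x
  intro x i hi
  have e1 := fe ((hammingDist x (v n i) + 1) / 2) x (v n i) (by omega)
  have e2 := be ((hammingDist (π x) (π (v n i)) + 1) / 2) (π x) (π (v n i)) (by omega)
  rw [Equiv.symm_apply_apply, Equiv.symm_apply_apply] at e2
  rw [fix i hi] at e1 e2
  omega

def notPerm (n : ℕ) : Equiv.Perm (V n) where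
  toFun x := fun i => !x i
  invFun x := fun i => !x i
  left_inv x := by simp
  right_inv x := by simp

lemma notPerm_auto (n p : ℕ) : IsAuto (gpow (Q n) p) (notPerm n) := by
  intro x y
  rw [dist_le_iff, dist_le_iff, (notPerm n).injective.ne_iff]
  have : hammingDist (notPerm n x) (notPerm n y) = hammingDist x y := by
    rw [hd_eq, hd_eq]; simp [notPerm]
  rw [this]

end PCube

theorem stmt_5 (n p : ℕ) (h1 : 2 < p) (h2 : p < n - 1) :
    distNum (gpow (Q n) p) = 2 := by
  classical
  apply le_antisymm
  · apply Nat.sInf_le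
    refine ⟨fun x => if PCube.S n x then 1 else 0, ?_⟩
    intro π ha hc
    refine PCube.rigid h1 (by omega) π (PCube.auto_iff ha) ?_
    intro x
    have := hc x
    by_cases a : PCube.S n (π x) <;> by_cases b : PCube.S n x <;> simp_all
  · have hne : {r : ℕ | ∃ c : (Fin n → Bool) → Fin r, IsDistinguishing (gpow (Q n) p) c}.Nonempty := by
      refine ⟨2, fun x => if PCube.S n x then 1 else 0, ?_⟩
      intro π ha hc
      refine PCube.rigid h1 (by omega) π (PCube.auto_iff ha) ?_
      intro x
      have := hc x
      by_cases a : PCube.S n (π x) <;> by_cases b : PCube.S n x <;> simp_all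
    apply le_csInf hne
    rintro r ⟨c, hc⟩
    by_contra hr
    have : Subsingleton (Fin r) := by
      rw [Fin.subsingleton_iff_le_one]; omega
    have e := hc (PCube.notPerm n) (PCube.notPerm_auto n p) (fun x => Subsingleton.elim _ _)
    have e1 := congrFun (congrArg (fun f : Equiv.Perm (Fin n → Bool) => f (fun _ => true)) e)
      ⟨0, by omega⟩
    simp [PCube.notPerm] at e1
end

section
/- For n ≥ 2, the distinguishing number of Q_n^{n−1} equals the least positive integer x such that x(x−1)/2 ≥ 2^{n−1}. -/
/-- antipode -/
def antip {n : ℕ} (v : Fin n → Bool) : Fin n → Bool := fun i => !(v i)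

theorem antip_antip {n : ℕ} (v : Fin n → Bool) : antip (antip v) = v := by
  funext i; simp [antip]

theorem Q_adj {n : ℕ} (v w : Fin n → Bool) : (Q n).Adj v w ↔ hammingDist v w = 1 := Iff.rfl

theorem Q_walk_ge {n : ℕ} {v w : Fin n → Bool} (p : (Q n).Walk v w) :
    hammingDist v w ≤ p.length := by
  induction p with
  | nil => simp
  | @cons a b c h p ih =>
    have h1 := (Q_adj _ _).1 h
    have h2 := hammingDist_triangle a b c
    rw [SimpleGraph.Walk.length_cons]
    omega

theorem Q_walk_exists {n : ℕ} (k : ℕ) : ∀ v w : Fin n → Bool, hammingDist v w = k →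
    ∃ p : (Q n).Walk v w, p.length = k := by
  induction k with
  | zero =>
    intro v w h
    obtain rfl := hammingDist_eq_zero.1 h
    exact ⟨SimpleGraph.Walk.nil, rfl⟩
  | succ k ih =>
    intro v w h
    have hne : v ≠ w := by
      rintro rfl
      simp at h
    obtain ⟨i, hi⟩ := Function.ne_iff.1 hne
    let u := Function.update v i (w i)
    have hvu : hammingDist v u = 1 := by
      unfold hammingDist
      rw [Finset.card_eq_one]
      refine ⟨i, ?_⟩
      ext j
      by_cases hj : j = i
      · subst hj; simp [u, hi]
      · simp [u, hj]
    have huw : hammingDist u w = k := by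
      unfold hammingDist at h ⊢
      have : (Finset.univ.filter fun j => u j ≠ w j)
          = (Finset.univ.filter fun j => v j ≠ w j).erase i := by
        ext j
        by_cases hj : j = i
        · subst hj; simp [u]
        · simp [u, hj]
      rw [this, Finset.card_erase_of_mem (by simp [hi]), h]
      rfl
    obtain ⟨p, hp⟩ := ih u w huw
    exact ⟨SimpleGraph.Walk.cons ((Q_adj _ _).2 hvu) p, by simp [hp]⟩

theorem Q_dist {n : ℕ} (v w : Fin n → Bool) : (Q n).dist v w = hammingDist v w := by
  obtain ⟨p, hp⟩ := Q_walk_exists _ v w rfl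
  apply le_antisymm
  · rw [← hp]; exact SimpleGraph.dist_le p
  · obtain ⟨q, hq⟩ := p.reachable.exists_walk_length_eq_dist
    rw [← hq]; exact Q_walk_ge q

theorem pow_adj {m : ℕ} (v w : Fin (m + 1) → Bool) :
    (gpow (Q (m + 1)) m).Adj v w ↔ v ≠ w ∧ w ≠ antip v := by
  obtain ⟨p, hp⟩ := Q_walk_exists _ v w rfl
  show (v ≠ w ∧ (Q _).Reachable v w ∧ (Q _).dist v w ≤ m) ↔ _
  rw [Q_dist]
  have key : hammingDist v w ≤ m ↔ w ≠ antip v := by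
    have hle : hammingDist v w ≤ m + 1 := by
      simpa using hammingDist_le_card_fintype (x := v) (y := w)
    have : hammingDist v w = m + 1 ↔ w = antip v := by
      unfold hammingDist
      constructor
      · intro h
        have h2 := (Finset.card_eq_iff_eq_univ _).1 (h.trans (by simp : m + 1 = Fintype.card (Fin (m+1))))
        funext i
        have h3 := Finset.mem_univ i
        rw [← h2] at h3
        simp only [Finset.mem_filter, Finset.mem_univ, true_and] at h3
        simp only [antip]
        revert h3
        cases v i <;> cases w i <;> simp
      · rintro rfl
        simp [antip]
    rw [Ne, ← this]
    omega
  rw [key]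
  exact ⟨fun h => ⟨h.1, h.2.2⟩, fun h => ⟨h.1, p.reachable, h.2⟩⟩

theorem antip_ne {m : ℕ} (v : Fin (m + 1) → Bool) : antip v ≠ v := by
  intro h
  have := congrFun h 0
  simp [antip] at this

theorem dist_iff {m r : ℕ} (c : (Fin (m + 1) → Bool) → Fin r) :
    IsDistinguishing (gpow (Q (m + 1)) m) c ↔
      ∀ a b, c a = c b → c (antip a) = c (antip b) → a = b := by
  constructor
  · intro h a b hab hab'
    by_contra hne
    have inj : ∀ x y : Fin (m+1) → Bool, antip x = antip y ↔ x = y := fun x y =>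
      ⟨fun h => by rw [← antip_antip x, h, antip_antip], fun h => by rw [h]⟩
    let f : (Fin (m+1) → Bool) → (Fin (m+1) → Bool) := fun v =>
      if v = a then b else if v = b then a else if v = antip a then antip b
      else if v = antip b then antip a else v
    have hf : Function.Involutive f := by
      intro v
      have := antip_ne a
      have := antip_ne b
      have := antip_antip a
      have := antip_antip b
      simp only [f]
      grind
    have hanti : ∀ v, f (antip v) = antip (f v) := by
      intro v
      have := antip_ne a
      have := antip_ne b
      have := antip_ne v
      have := antip_antip a
      have := antip_antip b
      have := antip_antip v
      simp only [f]
      grind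
    have := h hf.toPerm (by
      intro v w
      rw [pow_adj, pow_adj]
      simp only [Function.Involutive.coe_toPerm, ← hanti, ne_eq, hf.injective.eq_iff])
      (by
        intro v
        simp only [Function.Involutive.coe_toPerm, f]
        grind)
    have h2 := congrArg (fun e : Equiv.Perm _ => e a) this
    simp [f] at h2
    exact hne h2.symm
  · intro h π hπ hc
    ext1 v
    have hanti : π (antip v) = antip (π v) := by
      have h1 := hπ v (antip v)
      rw [pow_adj, pow_adj] at h1
      by_contra hcon
      exact (h1.1 ⟨fun h => antip_ne v (π.injective h).symm, hcon⟩).2 rfl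
    exact h _ _ (hc v) (by rw [← hanti, hc]; rfl)

theorem exists_iff (m r : ℕ) :
    (∃ c : (Fin (m + 1) → Bool) → Fin r, IsDistinguishing (gpow (Q (m + 1)) m) c) ↔
      2 ^ m ≤ r * (r - 1) / 2 := by
  simp only [dist_iff]
  constructor
  · rintro ⟨c, hc⟩
    have h1 : (Finset.univ : Finset (Fin (m + 1) → Bool)).card
        ≤ ((Finset.univ : Finset (Fin r)).offDiag).card := by
      apply Finset.card_le_card_of_injOn (fun v => (c v, c (antip v)))
      · intro v _
        simp only [Finset.coe_offDiag, Finset.coe_univ, Set.mem_offDiag, Set.mem_univ, true_and]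
        intro h
        exact antip_ne v (hc v (antip v) h (by rw [antip_antip, h])).symm
      · intro a _ b _ hab
        simp only [Prod.mk.injEq] at hab
        exact hc a b hab.1 hab.2
    rw [Finset.offDiag_card] at h1
    simp only [Finset.card_univ, Fintype.card_fin, Fintype.card_pi, Fintype.card_bool,
      Finset.prod_const] at h1
    rw [pow_succ] at h1
    rw [Nat.mul_sub_one]
    omega
  · intro h
    have hcard : Fintype.card (Fin m → Bool) ≤ Fintype.card {z : Sym2 (Fin r) // ¬ z.IsDiag} := by
      rw [Sym2.card_subtype_not_diag, Fintype.card_fin, Nat.choose_two_right]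
      simpa using h
    obtain ⟨g⟩ := Function.Embedding.nonempty_of_card_le hcard
    have hg : ∀ u, ∃ x y, (g u).1 = s(x, y) ∧ x ≠ y := by
      intro u
      obtain ⟨z, hz⟩ := g u
      induction z with
      | _ x y => exact ⟨x, y, rfl, by simpa using hz⟩
    choose x y hxy hne using hg
    have hs : ∀ u u', s(x u, y u) = s(x u', y u') → u = u' := fun u u' h =>
      g.injective (Subtype.ext (by rw [hxy, hxy, h]))
    let tl : (Fin (m + 1) → Bool) → (Fin m → Bool) := fun v => Fin.tail v
    have htl : ∀ a b : Fin (m + 1) → Bool, a 0 = b 0 → tl a = tl b → a = b := by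
      intro a b h0 h1
      rw [← Fin.cons_self_tail a, ← Fin.cons_self_tail b, h0]
      exact congrArg _ h1
    refine ⟨fun v => if v 0 then y (tl (antip v)) else x (tl v), ?_⟩
    intro a b h1 h2
    have ha : (antip a) 0 = !(a 0) := rfl
    have hb : (antip b) 0 = !(b 0) := rfl
    simp only [ha, hb, antip_antip] at h1 h2
    rcases ha0 : a 0 with _ | _ <;> rcases hb0 : b 0 with _ | _ <;>
      simp only [ha0, hb0, Bool.not_true, Bool.not_false, if_true, Bool.false_eq_true, if_false] at h1 h2
    · exact htl a b (by rw [ha0, hb0]) (hs _ _ (by rw [h1, h2]))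
    · have := hs (tl a) (tl (antip b)) (by rw [h1, h2, Sym2.eq_swap])
      rw [← this] at h1
      exact absurd h1 (hne _)
    · have := hs (tl (antip a)) (tl b) (by rw [h1, h2, Sym2.eq_swap])
      rw [← this] at h2
      exact absurd h2 (hne _)
    · have := htl (antip a) (antip b) (by rw [ha, hb, ha0, hb0]) (hs _ _ (by rw [h1, h2]))
      rw [← antip_antip a, this, antip_antip]

theorem stmt_9 (n : ℕ) (hn : 2 ≤ n) :
    distNum (gpow (Q n) (n - 1)) = sInf {x : ℕ | 0 < x ∧ 2 ^ (n - 1) ≤ x * (x - 1) / 2} := by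
  obtain ⟨m, rfl⟩ : ∃ m, n = m + 1 := ⟨n - 1, by omega⟩
  simp only [Nat.add_sub_cancel]
  unfold distNum
  congr 1
  ext r
  simp only [Set.mem_setOf_eq, exists_iff]
  refine ⟨fun h => ⟨?_, h⟩, fun h => h.2⟩
  rcases Nat.eq_zero_or_pos r with rfl | hr
  · simp at h
  · exact hr
end

section
/- For every vertex x = x_1x_2x_3 of AQ_3, let x* = x_1 x̄_2 x̄_3 denote the vertex obtained by flipping the last two coordinates. Then the transposition of the vertex set that swaps x and x* and fixes all other vertices is an automorphism of AQ_3. Equivalently, x and x* are adjacent to precisely the same set of vertices: for every vertex w ∉ {x, x*}, w is adjacent to x if and only if w is adjacent to x*, and moreover x is adjacent to x*. -/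
/-- The `n`-dimensional augmented cube: vertices are `{0,1}^n`; distinct vertices `a`, `b`
are adjacent iff either (1) they differ in exactly one coordinate `l`, or (2) there is an
`l` such that they agree on all coordinates before `l` and differ on all coordinates from
`l` on. -/
def AQ (n : ℕ) : SimpleGraph (Fin n → Bool) where
  Adj a b := (∃ l, a l ≠ b l ∧ ∀ i, i ≠ l → a i = b i) ∨
             (∃ l, (∀ i, i < l → a i = b i) ∧ ∀ i, l ≤ i → a i ≠ b i)
  symm := by
    constructor
    rintro a b (⟨l, h1, h2⟩ | ⟨l, h1, h2⟩)
    · exact Or.inl ⟨l, h1.symm, fun i hi => (h2 i hi).symm⟩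
    · exact Or.inr ⟨l, fun i hi => (h1 i hi).symm, fun i hi => (h2 i hi).symm⟩
  loopless := by
    constructor
    rintro a (⟨l, h1, _⟩ | ⟨l, _, h2⟩)
    · exact h1 rfl
    · exact h2 l le_rfl rfl

theorem isAuto_swap_of_twin {V : Type*} [DecidableEq V] (G : SimpleGraph V) (x y : V)
    (h : ∀ w, w ≠ x → w ≠ y → (G.Adj w x ↔ G.Adj w y)) : IsAuto G (Equiv.swap x y) := by
  intro v w
  have h' : ∀ w, w ≠ x → w ≠ y → (G.Adj x w ↔ G.Adj y w) := fun w h1 h2 => by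
    rw [G.adj_comm x, G.adj_comm y]; exact h w h1 h2
  have hxy := G.adj_comm x y
  have lx := G.irrefl (v := x)
  have ly := G.irrefl (v := y)
  simp only [Equiv.swap_apply_def]
  grind

theorem AQ3_adj (a b : Fin 3 → Bool) : (AQ 3).Adj a b ↔
    (a ≠ b ∧ ¬ (a 0 ≠ b 0 ∧ a 1 ≠ b 1 ∧ a 2 = b 2) ∧ ¬ (a 0 ≠ b 0 ∧ a 1 = b 1 ∧ a 2 ≠ b 2)) := by
  rw [Ne, funext_iff]
  simp only [AQ, Fin.exists_fin_succ, Fin.forall_fin_succ]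
  simp
  generalize a 0 = p, a 1 = q, a 2 = r, b 0 = s, b 1 = t, b 2 = u
  revert p q r s t u
  decide

theorem stmt_11 (x : Fin 3 → Bool) :
    IsAuto (AQ 3) (Equiv.swap x (fun i => if i = 0 then x 0 else !(x i))) ∧
    (AQ 3).Adj x (fun i => if i = 0 then x 0 else !(x i)) ∧
    ∀ w : Fin 3 → Bool, w ≠ x → w ≠ (fun i => if i = 0 then x 0 else !(x i)) →
      ((AQ 3).Adj w x ↔ (AQ 3).Adj w (fun i => if i = 0 then x 0 else !(x i))) := by
  have key : ∀ w : Fin 3 → Bool, w ≠ x → w ≠ (fun i => if i = 0 then x 0 else !(x i)) →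
      ((AQ 3).Adj w x ↔ (AQ 3).Adj w (fun i => if i = 0 then x 0 else !(x i))) := by
    intro w
    simp only [AQ3_adj, Ne, funext_iff, Fin.forall_fin_succ]
    simp
    generalize w 0 = p, w 1 = q, w 2 = r, x 0 = s, x 1 = t, x 2 = u
    revert p q r s t u
    decide
  refine ⟨isAuto_swap_of_twin _ _ _ key, ?_, key⟩
  rw [AQ3_adj, Ne, funext_iff]
  simp [Fin.forall_fin_succ]
end

section
/- Fix n ≥ 1, write 𝟎 = 0⋯0 and 𝟏 = 0⋯01 in {0,1}^n, and suppose a coloring c of the vertices of AQ_n has the property that for any two vertices x = x_1⋯x_n and y = y_1⋯y_n with x_n ≠ y_n and with x, y both different from 𝟎 and 𝟏, we have c(x) ≠ c(y). If π is an automorphism of AQ_n that preserves c (i.e., c(π v) = c(v) for all v) and fixes both 𝟎 and 𝟏, then π is the identity automorphism. -/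
namespace AQaux

variable {n : ℕ}

lemma hd_eq_sum (x y : Fin n → Bool) :
    hammingDist x y = ∑ i, (if x i ≠ y i then 1 else 0) := by
  simp [hammingDist, Finset.card_filter]

lemma hd_update (x v : Fin n → Bool) (l : Fin n) (a : Bool) :
    hammingDist x (Function.update v l a) =
      (if x l ≠ a then 1 else 0) + ∑ i ∈ Finset.univ.erase l, (if x i ≠ v i then 1 else 0) := by
  rw [hd_eq_sum, ← Finset.add_sum_erase _ _ (Finset.mem_univ l)]
  congr 1
  · simp
  · apply Finset.sum_congr rfl
    intro i hi
    rw [Function.update_of_ne (Finset.ne_of_mem_erase hi)]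

lemma coord_eq (x y v : Fin n → Bool) (l : Fin n)
    (h : ∀ a, hammingDist x (Function.update v l a) = hammingDist y (Function.update v l a)) :
    x l = y l := by
  have ht := h true
  have hf := h false
  rw [hd_update, hd_update] at ht hf
  cases hx : x l <;> cases hy : y l <;> simp [hx, hy] at ht hf ⊢ <;> omega

/-- Even/odd suffix vectors. -/
def V (L : Fin n) (b : Bool) (l : Fin n) : Fin n → Bool :=
  fun i => if i = L then b else decide (l ≤ i)

lemma hd_adj {L : Fin n} (hL : (L : ℕ) = n - 1) {x y : Fin n → Bool} (hxy : x L = y L)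
    (h : (AQ n).Adj x y) : hammingDist x y ≤ 1 := by
  rcases h with ⟨l, h1, h2⟩ | ⟨l, h1, h2⟩
  · unfold hammingDist
    refine (Finset.card_le_card (t := {l}) ?_).trans (by simp)
    intro i hi
    simp only [Finset.mem_filter, Finset.mem_univ, true_and] at hi
    simp only [Finset.mem_singleton]
    by_contra hne
    exact hi (h2 i hne)
  · exact absurd hxy (h2 L (by rw [Fin.le_def]; omega))

lemma hd_le {L : Fin n} (hL : (L : ℕ) = n - 1) (π : (Fin n → Bool) → (Fin n → Bool))
    (ha : ∀ v w, (AQ n).Adj v w → (AQ n).Adj (π v) (π w)) (hl : ∀ v, π v L = v L) :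
    ∀ k x y, x L = y L → hammingDist x y = k → hammingDist (π x) (π y) ≤ k := by
  intro k
  induction k with
  | zero =>
    intro x y _ h
    rw [hammingDist_eq_zero] at h
    simp [h]
  | succ k ih =>
    intro x y hxy h
    have hne : x ≠ y := by
      rintro rfl
      simp at h
    obtain ⟨i, hi⟩ := Function.ne_iff.mp hne
    have hiL : L ≠ i := by
      rintro rfl
      exact hi hxy
    set z := Function.update y i (x i) with hz
    have hzL : z L = y L := by rw [hz, Function.update_of_ne hiL]
    have hd : hammingDist x z = k := by
      have e1 := hd_update x y i (x i)
      have e2 := hd_update x y i (y i)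
      rw [Function.update_eq_self] at e2
      rw [hz, e1]
      simp [hi] at e2 ⊢
      omega
    have hadj : (AQ n).Adj z y := by
      left
      refine ⟨i, by simpa [hz] using hi, fun j hj => by rw [hz, Function.update_of_ne hj]⟩
    have s1 := ih x z (by rw [hxy, hzL]) hd
    have s2 := hd_adj hL (by rw [hl, hl, hzL]) (ha _ _ hadj)
    have := hammingDist_triangle (π x) (π z) (π y)
    omega

lemma hd_V {L : Fin n} (hL : (L : ℕ) = n - 1) (b : Bool) (l : Fin n) :
    hammingDist (V L b l) (V L b L) = L - l := by
  unfold hammingDist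
  rw [← Fin.card_Ico]
  congr 1
  ext i
  have := i.2
  simp only [V, Finset.mem_filter, Finset.mem_univ, true_and, Finset.mem_Ico, Fin.le_def,
    Fin.lt_def, Fin.ext_iff]
  split_ifs with h
  · simp [h]
  · have : ¬ (L : ℕ) ≤ i := by omega
    simp [this]
    omega

lemma adj_V {L : Fin n} (hL : (L : ℕ) = n - 1) (b : Bool) (x : Fin n → Bool) (hx : x L = b) :
    (AQ n).Adj x (V L (!b) L) ↔ ∃ l, x = V L b l := by
  have hle : ∀ i : Fin n, i ≤ L := fun i => by rw [Fin.le_def]; omega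
  have hVL : V L (!b) L L = !b := by simp [V]
  have hV : ∀ i, i ≠ L → V L (!b) L i = false := fun i hi => by
    have : ¬ L ≤ i := fun h => hi (le_antisymm (hle i) h)
    simp [V, hi, this]
  constructor
  · rintro (⟨l, h1, h2⟩ | ⟨l, h1, h2⟩)
    · have hl : l = L := by
        by_contra hne
        have := h2 L (Ne.symm hne)
        rw [hVL, hx] at this
        cases b <;> simp at this
      subst hl
      refine ⟨l, ?_⟩
      ext i
      by_cases hi : i = l
      · subst hi
        simp [V, hx]
      · rw [h2 i hi]
        simp [V, hi]
    · refine ⟨l, ?_⟩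
      ext i
      by_cases hi : i = L
      · subst hi
        simp [V, hx]
      · by_cases hli : l ≤ i
        · have := h2 i hli
          rw [hV i hi] at this
          simp [V, hi, hli]
          simpa using this
        · have := h1 i (not_le.mp hli)
          rw [hV i hi] at this
          simp [V, hi, hli, this]
  · rintro ⟨l, rfl⟩
    right
    refine ⟨l, fun i hi => ?_, fun i hi => ?_⟩
    · have hiL : i ≠ L := (lt_of_lt_of_le hi (hle l)).ne
      rw [hV i hiL]
      simp [V, hiL, hi]
    · by_cases hiL : i = L
      · subst hiL
        rw [hVL]
        simp [V]
      · rw [hV i hiL]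
        simp [V, hiL, hi]

lemma main {L : Fin n} (hL : (L : ℕ) = n - 1) (π : Equiv.Perm (Fin n → Bool))
    (hauto : IsAuto (AQ n) π) (hl : ∀ v, π v L = v L)
    (hfix : ∀ b, π (V L b L) = V L b L) : π = 1 := by
  have hl' : ∀ v, π.symm v L = v L := fun v => by
    have := hl (π.symm v)
    rw [Equiv.apply_symm_apply] at this
    exact this.symm
  have hd : ∀ x y, x L = y L → hammingDist (π x) (π y) = hammingDist x y := by
    intro x y hxy
    apply le_antisymm
    · exact hd_le hL π (fun v w h => (hauto v w).2 h) hl _ x y hxy rfl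
    · have := hd_le hL π.symm (fun v w h => by
        rw [← hauto]
        simpa using h) hl' _ (π x) (π y) (by rw [hl, hl, hxy]) rfl
      simpa using this
  have hle : ∀ i : Fin n, i ≤ L := fun i => by rw [Fin.le_def]; omega
  have hVLb : ∀ b l, V L b l L = b := fun b l => by simp [V]
  have hfixV : ∀ b l, π (V L b l) = V L b l := by
    intro b l
    have h1 := (adj_V hL b (V L b l) (hVLb b l)).2 ⟨l, rfl⟩
    rw [← hauto, hfix, adj_V hL b _ (by rw [hl, hVLb])] at h1
    obtain ⟨l', h'⟩ := h1
    have h2 := hd (V L b l) (V L b L) (by rw [hVLb, hVLb])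
    rw [hfix, h', hd_V hL, hd_V hL] at h2
    have a1 := hle l
    have a2 := hle l'
    rw [Fin.le_def] at a1 a2
    have : l' = l := Fin.ext (by omega)
    rw [h', this]
  ext x i
  rw [Equiv.Perm.one_apply]
  by_cases hi : i = L
  · subst hi
    rw [hl]
  · have hdx : ∀ l, hammingDist (π x) (V L (x L) l) = hammingDist x (V L (x L) l) := by
      intro l
      have := hd x (V L (x L) l) (by rw [hVLb])
      rwa [hfixV] at this
    have hiL : (i : ℕ) < L := by
      have := hle i
      have h3 : (i : ℕ) ≠ L := fun h => hi (Fin.ext h)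
      rw [Fin.le_def] at this
      omega
    rw [coord_eq (π x) x (V L (x L) i) i]
    intro a
    cases a
    · have hlt : (i : ℕ) + 1 < n := by omega
      have : Function.update (V L (x L) i) i false = V L (x L) ⟨i + 1, hlt⟩ := by
        ext j
        by_cases hj : j = i
        · subst hj
          simp [V, hi, Fin.le_def]
        · rw [Function.update_of_ne hj]
          have h3 : (j : ℕ) ≠ i := fun h => hj (Fin.ext h)
          have : i ≤ j ↔ (⟨i + 1, hlt⟩ : Fin n) ≤ j := by
            simp only [Fin.le_def]
            omega
          simp only [V, this]
      rw [this, hdx]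
    · have : Function.update (V L (x L) i) i true = V L (x L) i := by
        rw [Function.update_eq_self_iff]
        simp [V, hi]
      rw [this, hdx]

end AQaux

theorem stmt_12 (n : ℕ) (hn : 1 ≤ n) {α : Type*} (c : (Fin n → Bool) → α)
    (hc : ∀ x y : Fin n → Bool,
      x ≠ (fun _ => false) → x ≠ (fun i : Fin n => decide ((i : ℕ) = n - 1)) →
      y ≠ (fun _ => false) → y ≠ (fun i : Fin n => decide ((i : ℕ) = n - 1)) →
      x ⟨n - 1, by omega⟩ ≠ y ⟨n - 1, by omega⟩ → c x ≠ c y)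
    (π : Equiv.Perm (Fin n → Bool)) (hauto : IsAuto (AQ n) π)
    (hpres : ∀ v, c (π v) = c v)
    (h0 : π (fun _ => false) = fun _ => false)
    (h1 : π (fun i : Fin n => decide ((i : ℕ) = n - 1)) = fun i : Fin n => decide ((i : ℕ) = n - 1)) :
    π = 1 := by
  have hL : ((⟨n - 1, by omega⟩ : Fin n) : ℕ) = n - 1 := rfl
  have e0 : AQaux.V (⟨n - 1, by omega⟩ : Fin n) false ⟨n - 1, by omega⟩ = fun _ => false := by
    ext i
    have := i.2
    simp only [AQaux.V, Fin.ext_iff, Fin.le_def]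
    split_ifs with h
    · rfl
    · simp
      omega
  have e1 : AQaux.V (⟨n - 1, by omega⟩ : Fin n) true ⟨n - 1, by omega⟩ =
      fun i : Fin n => decide ((i : ℕ) = n - 1) := by
    ext i
    have := i.2
    simp only [AQaux.V, Fin.ext_iff, Fin.le_def]
    split_ifs with h
    · simp [h]
    · simp [h]
      omega
  refine AQaux.main hL π hauto ?_ ?_
  · intro v
    by_cases hv0 : v = fun _ => false
    · rw [hv0, h0]
    by_cases hv1 : v = fun i : Fin n => decide ((i : ℕ) = n - 1)
    · rw [hv1, h1]
    by_contra hne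
    refine hc (π v) v ?_ ?_ hv0 hv1 hne (hpres v)
    · intro h
      exact hv0 (π.injective (h.trans h0.symm))
    · intro h
      exact hv1 (π.injective (h.trans h1.symm))
  · intro b
    cases b
    · rw [e0, h0]
    · rw [e1, h1]
end

section
/- The distinguishing number of the 3-dimensional augmented cube satisfies D(AQ_3) = 3. -/
instance decAQ (n : ℕ) : DecidableRel (AQ n).Adj := fun a b =>
  inferInstanceAs (Decidable ((∃ l, a l ≠ b l ∧ ∀ i, i ≠ l → a i = b i) ∨
             (∃ l, (∀ i, i < l → a i = b i) ∧ ∀ i, l ≤ i → a i ≠ b i)))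

/-- The vertex with the given coordinates. -/
def vtx (a b c : Bool) : Fin 3 → Bool := ![a, b, c]

/-- A distinguishing coloring with three colors. -/
def col (v : Fin 3 → Bool) : Fin 3 :=
  match v 0, v 1, v 2 with
  | false, false, false => 0
  | true, false, true => 0
  | true, true, true => 0
  | false, true, true => 1
  | true, false, false => 1
  | false, false, true => 1
  | true, true, false => 2
  | false, true, false => 2

lemma vtx_cases : ∀ v : Fin 3 → Bool,
    v = vtx false false false ∨ v = vtx false false true ∨ v = vtx false true false ∨
    v = vtx false true true ∨ v = vtx true false false ∨ v = vtx true false true ∨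
    v = vtx true true false ∨ v = vtx true true true := by
  decide +kernel

lemma key0 : ∀ a b d : Fin 3 → Bool, col a = 0 → col b = 0 → col d = 0 → a ≠ b →
    ¬ (AQ 3).Adj a b → (AQ 3).Adj a d → (AQ 3).Adj b d → d = vtx true true true := by
  decide +kernel

lemma key1 : ∀ a b d : Fin 3 → Bool, col a = 1 → col b = 1 → col d = 1 → a ≠ b →
    ¬ (AQ 3).Adj a b → (AQ 3).Adj a d → (AQ 3).Adj b d → d = vtx false true true := by
  decide +kernel

/-- A vertex is determined by its color and its adjacencies to the two fixed vertices. -/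
lemma key2 : ∀ a b : Fin 3 → Bool, col b = col a →
    ((AQ 3).Adj b (vtx true true true) ↔ (AQ 3).Adj a (vtx true true true)) →
    ((AQ 3).Adj b (vtx false true true) ↔ (AQ 3).Adj a (vtx false true true)) →
    a ≠ vtx true true true → a ≠ vtx false true true →
    b ≠ vtx true true true → b ≠ vtx false true true → b = a := by
  decide +kernel

lemma col_dist : IsDistinguishing (AQ 3) col := by
  intro π hA hc
  have h7 : π (vtx true true true) = vtx true true true := by
    refine key0 (π (vtx false false false)) (π (vtx true false true)) _ ?_ ?_ ?_ ?_ ?_ ?_ ?_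
    · rw [hc]; decide
    · rw [hc]; decide
    · rw [hc]; decide
    · rw [π.injective.ne_iff]; decide
    · rw [hA]; decide +kernel
    · rw [hA]; decide +kernel
    · rw [hA]; decide +kernel
  have h3 : π (vtx false true true) = vtx false true true := by
    refine key1 (π (vtx true false false)) (π (vtx false false true)) _ ?_ ?_ ?_ ?_ ?_ ?_ ?_
    · rw [hc]; decide
    · rw [hc]; decide
    · rw [hc]; decide
    · rw [π.injective.ne_iff]; decide
    · rw [hA]; decide +kernel
    · rw [hA]; decide +kernel
    · rw [hA]; decide +kernel
  apply Equiv.ext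
  intro v
  rw [Equiv.Perm.one_apply]
  by_cases e7 : v = vtx true true true
  · rw [e7, h7]
  by_cases e3 : v = vtx false true true
  · rw [e3, h3]
  refine key2 v (π v) (hc v) ?_ ?_ e7 e3 ?_ ?_
  · have := hA v (vtx true true true)
    rwa [h7] at this
  · have := hA v (vtx false true true)
    rwa [h3] at this
  · intro h; exact e7 (π.injective (h.trans h7.symm))
  · intro h; exact e3 (π.injective (h.trans h3.symm))

/-- The permutation exchanging `a` with `b` and `c` with `d`. -/
def dswap (a b c d : Fin 3 → Bool) : Equiv.Perm (Fin 3 → Bool) :=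
  Equiv.swap a b * Equiv.swap c d

lemma not_dist {r : ℕ} (c : (Fin 3 → Bool) → Fin r) (π : Equiv.Perm (Fin 3 → Bool))
    (h1 : π (vtx false false false) ≠ vtx false false false ∨
      π (vtx true false true) ≠ vtx true false true)
    (hA : ∀ v w, (AQ 3).Adj (π v) (π w) ↔ (AQ 3).Adj v w)
    (hc : ∀ v, c (π v) = c v) : ¬ IsDistinguishing (AQ 3) c := by
  intro h
  have := h π hA hc
  subst this
  simp at h1

lemma swap_col {r : ℕ} (c : (Fin 3 → Bool) → Fin r) (a b : Fin 3 → Bool) (h : c a = c b) (v) :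
    c (Equiv.swap a b v) = c v := by
  rw [Equiv.swap_apply_def]
  split_ifs with h1 h2
  · rw [h1, h]
  · rw [h2, h]
  · rfl

lemma lower {r : ℕ} (hr : r < 3) (c : (Fin 3 → Bool) → Fin r) : ¬ IsDistinguishing (AQ 3) c := by
  by_cases h1 : c (vtx false false false) = c (vtx false true true)
  · exact not_dist c (Equiv.swap (vtx false false false) (vtx false true true))
      (by decide +kernel) (by decide +kernel) (swap_col c _ _ h1)
  by_cases h2 : c (vtx true false true) = c (vtx true true false)
  · exact not_dist c (Equiv.swap (vtx true false true) (vtx true true false))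
      (by decide +kernel) (by decide +kernel) (swap_col c _ _ h2)
  by_cases h3 : c (vtx false false false) = c (vtx true false true)
  · have h4 : c (vtx false true true) = c (vtx true true false) := by
      simp only [Fin.ext_iff] at *
      omega
    exact not_dist c (dswap (vtx false false false) (vtx true false true)
      (vtx false true true) (vtx true true false)) (by decide +kernel) (by decide +kernel)
      (fun v => (swap_col c _ _ h3 _).trans (swap_col c _ _ h4 v))
  · have h4 : c (vtx false false false) = c (vtx true true false) := by
      simp only [Fin.ext_iff] at *
      omega
    have h5 : c (vtx false true true) = c (vtx true false true) := by
      simp only [Fin.ext_iff] at *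
      omega
    exact not_dist c (dswap (vtx false false false) (vtx true true false)
      (vtx false true true) (vtx true false true)) (by decide +kernel) (by decide +kernel)
      (fun v => (swap_col c _ _ h4 _).trans (swap_col c _ _ h5 v))

theorem stmt_14 : distNum (AQ 3) = 3 := by
  unfold distNum
  apply le_antisymm
  · exact Nat.sInf_le ⟨col, col_dist⟩
  · refine le_csInf ⟨3, col, col_dist⟩ ?_
    rintro r ⟨c, hc⟩
    by_contra h
    exact lower (not_le.mp h) c hc
end

section
/- For every n ≥ 4, the distinguishing number of the n-dimensional augmented cube satisfies D(AQ_n) = 2. -/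
namespace AQAux

variable {V : Type} [AddCommGroup V]

structure Sys (n : ℕ) (s : ℕ → V) (S : Set V) (φ : ℕ → V → Bool) : Prop where
  hn : 4 ≤ n
  h2 : ∀ x : V, x + x = 0
  add : ∀ l x y, φ l (x + y) = xor (φ l x) (φ l y)
  hs : ∀ l j, l < n → j < n → φ l (s j) = decide (l = j)
  mem : ∀ x, x ∈ S ↔ (∃ i, i < n ∧ x = s i) ∨ (∃ i, i + 1 < n ∧ x = s i + s (i + 1))

structure Aut0 (S : Set V) (ρ : V → V) : Prop where
  inj : ∀ x y, ρ x = ρ y → x = y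
  adj : ∀ x y, ρ x + ρ y ∈ S ↔ x + y ∈ S
  zero : ρ 0 = 0

namespace Sys

variable {n : ℕ} {s : ℕ → V} {S : Set V} {φ : ℕ → V → Bool}

lemma rev (H : Sys n s S φ) : Sys n (fun i => s (n - 1 - i)) S (fun i => φ (n - 1 - i)) where
  hn := H.hn
  h2 := H.h2
  add := fun l => H.add _
  hs := by
    intro l j hl hj
    rw [H.hs _ _ (by omega) (by omega)]
    apply decide_eq_decide.2
    omega
  mem := by
    intro x
    rw [H.mem]
    constructor
    · rintro (⟨i, hi, rfl⟩ | ⟨i, hi, rfl⟩)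
      · refine Or.inl ⟨n - 1 - i, by omega, ?_⟩
        congr 1; omega
      · refine Or.inr ⟨n - 2 - i, by omega, ?_⟩
        rw [add_comm]
        congr 2 <;> omega
    · rintro (⟨i, hi, rfl⟩ | ⟨i, hi, rfl⟩)
      · exact Or.inl ⟨n - 1 - i, by omega, rfl⟩
      · refine Or.inr ⟨n - 2 - i, by omega, ?_⟩
        rw [add_comm]
        congr 2 <;> omega

lemma cancel (H : Sys n s S φ) (x y : V) : x + (x + y) = y := by
  rw [← add_assoc, H.h2, zero_add]

lemma s_mem (H : Sys n s S φ) {i : ℕ} (hi : i < n) : s i ∈ S := (H.mem _).2 (Or.inl ⟨i, hi, rfl⟩)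

lemma e_mem (H : Sys n s S φ) {i : ℕ} (hi : i + 1 < n) : s i + s (i + 1) ∈ S :=
  (H.mem _).2 (Or.inr ⟨i, hi, rfl⟩)

lemma phi_zero (H : Sys n s S φ) (l : ℕ) : φ l 0 = false := by
  have := H.add l 0 0
  simp at this
  exact this

lemma zero_notMem (H : Sys n s S φ) : (0 : V) ∉ S := by
  intro h
  rcases (H.mem _).1 h with ⟨i, hi, h⟩ | ⟨i, hi, h⟩
  · have h1 := H.phi_zero i
    have h2 := H.hs i i hi hi
    grind
  · have h1 := H.phi_zero i
    have h2 := H.hs i i (by omega) (by omega)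
    have h3 := H.hs i (i+1) (by omega) (by omega)
    have h4 := H.add i (s i) (s (i+1))
    grind

lemma s_inj (H : Sys n s S φ) {i j : ℕ} (hi : i < n) (hj : j < n) (h : s i = s j) : i = j := by
  have h2 := H.hs i i hi hi
  have h3 := H.hs i j hi hj
  grind

lemma s_ne_e (H : Sys n s S φ) {i j : ℕ} (hi : i < n) (hj : j + 1 < n) :
    s i ≠ s j + s (j + 1) := by
  intro h
  have e : ∀ l, l < n → decide (l = i) = xor (decide (l = j)) (decide (l = j+1)) := by
    intro l hl
    rw [← H.hs l i hl hi, ← H.hs l j hl (by omega), ← H.hs l (j+1) hl hj, ← H.add, h]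
  have e1 := e j (by omega)
  have e2 := e (j+1) (by omega)
  grind

lemma e_inj (H : Sys n s S φ) {i j : ℕ} (hi : i + 1 < n) (hj : j + 1 < n)
    (h : s i + s (i + 1) = s j + s (j + 1)) : i = j := by
  have e : ∀ l, l < n → xor (decide (l = i)) (decide (l = i+1))
      = xor (decide (l = j)) (decide (l = j+1)) := by
    intro l hl
    rw [← H.hs l i hl (by omega), ← H.hs l (i+1) hl hi, ← H.hs l j hl (by omega),
      ← H.hs l (j+1) hl hj, ← H.add, ← H.add, h]
  have e1 := e j (by omega)
  have e2 := e (j+1) (by omega)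
  grind

lemma nbr_s (H : Sys n s S φ) {i : ℕ} (hi : i < n) {x : V} (hx : x ∈ S) (h : x + s i ∈ S) :
    (i + 1 < n ∧ (x = s (i + 1) ∨ x = s i + s (i + 1))) ∨
    (∃ k, i = k + 1 ∧ (x = s k ∨ x = s k + s (k + 1))) := by
  rcases (H.mem _).1 hx with ⟨j, hj, rfl⟩ | ⟨j, hj, rfl⟩ <;>
  rcases (H.mem _).1 h with ⟨k, hk, h⟩ | ⟨k, hk, h⟩
  · exfalso
    have e : ∀ l, l < n → xor (decide (l = j)) (decide (l = i)) = decide (l = k) := by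
      intro l hl
      rw [← H.hs l i hl hi, ← H.hs l j hl hj, ← H.hs l k hl hk, ← H.add, h]
    have e1 := e j (by omega)
    have e2 := e i (by omega)
    have e3 := e k (by omega)
    grind
  · have e : ∀ l, l < n → xor (decide (l = j)) (decide (l = i)) =
        xor (decide (l = k)) (decide (l = k+1)) := by
      intro l hl
      rw [← H.hs l i hl hi, ← H.hs l j hl hj, ← H.hs l k hl (by omega), ← H.hs l (k+1) hl hk,
        ← H.add, ← H.add, h]
    have e1 := e j (by omega)
    have e2 := e i (by omega)
    have e3 := e k (by omega)
    have e4 := e (k+1) (by omega)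
    have : j = i + 1 ∨ i = j + 1 := by grind
    rcases this with rfl | rfl
    · exact Or.inl ⟨hj, Or.inl rfl⟩
    · exact Or.inr ⟨j, rfl, Or.inl rfl⟩
  · have e : ∀ l, l < n → xor (xor (decide (l = j)) (decide (l = j+1))) (decide (l = i)) =
        decide (l = k) := by
      intro l hl
      rw [← H.hs l i hl hi, ← H.hs l j hl (by omega), ← H.hs l (j+1) hl hj, ← H.hs l k hl hk,
        ← H.add, ← H.add, h]
    have e1 := e j (by omega)
    have e2 := e (j+1) (by omega)
    have e3 := e i (by omega)
    have e4 := e k (by omega)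
    have : j = i ∨ i = j + 1 := by grind
    rcases this with rfl | rfl
    · exact Or.inl ⟨hj, Or.inr rfl⟩
    · exact Or.inr ⟨j, rfl, Or.inr rfl⟩
  · exfalso
    have e : ∀ l, l < n → xor (xor (decide (l = j)) (decide (l = j+1))) (decide (l = i)) =
        xor (decide (l = k)) (decide (l = k+1)) := by
      intro l hl
      rw [← H.hs l i hl hi, ← H.hs l j hl (by omega), ← H.hs l (j+1) hl hj,
        ← H.hs l k hl (by omega), ← H.hs l (k+1) hl hk, ← H.add, ← H.add, ← H.add, h]
    have e1 := e j (by omega)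
    have e2 := e (j+1) (by omega)
    have e3 := e i (by omega)
    have e4 := e k (by omega)
    have e5 := e (k+1) (by omega)
    grind

lemma nbr_e (H : Sys n s S φ) {i : ℕ} (hi : i + 1 < n) {x : V} (hx : x ∈ S)
    (h : x + (s i + s (i + 1)) ∈ S) : x = s i ∨ x = s (i + 1) := by
  rcases (H.mem _).1 hx with ⟨j, hj, rfl⟩ | ⟨j, hj, rfl⟩
  · rw [add_comm] at h
    rcases H.nbr_s hj (H.e_mem hi) h with ⟨h1, h2 | h2⟩ | ⟨k, rfl, h2 | h2⟩
    · exact absurd h2.symm (H.s_ne_e h1 hi)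
    · left; rw [H.e_inj hi h1 h2]
    · exact absurd h2.symm (H.s_ne_e (by omega) hi)
    · right; rw [H.e_inj hi hj h2]
  · exfalso
    rcases (H.mem _).1 h with ⟨k, hk, h⟩ | ⟨k, hk, h⟩
    · have e : ∀ l, l < n → xor (xor (decide (l = j)) (decide (l = j+1)))
          (xor (decide (l = i)) (decide (l = i+1))) = decide (l = k) := by
        intro l hl
        rw [← H.hs l i hl (by omega), ← H.hs l (i+1) hl hi, ← H.hs l j hl (by omega),
          ← H.hs l (j+1) hl hj, ← H.hs l k hl hk, ← H.add, ← H.add, ← H.add, h]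
      have e1 := e j (by omega)
      have e2 := e (j+1) (by omega)
      have e3 := e i (by omega)
      have e4 := e (i+1) (by omega)
      have e5 := e k (by omega)
      grind
    · have e : ∀ l, l < n → xor (xor (decide (l = j)) (decide (l = j+1)))
          (xor (decide (l = i)) (decide (l = i+1))) = xor (decide (l = k)) (decide (l = k+1)) := by
        intro l hl
        rw [← H.hs l i hl (by omega), ← H.hs l (i+1) hl hi, ← H.hs l j hl (by omega),
          ← H.hs l (j+1) hl hj, ← H.hs l k hl (by omega), ← H.hs l (k+1) hl hk,
          ← H.add, ← H.add, ← H.add, ← H.add, h]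
      have e1 := e j (by omega)
      have e2 := e (j+1) (by omega)
      have e3 := e i (by omega)
      have e4 := e (i+1) (by omega)
      have e5 := e k (by omega)
      have e6 := e (k+1) (by omega)
      grind

/-- adjacency between the `s`-generators -/
lemma ss (H : Sys n s S φ) {i j : ℕ} (hi : i < n) (hj : j < n) (h : s i + s j ∈ S) :
    i = j + 1 ∨ j = i + 1 := by
  rcases H.nbr_s hj (H.s_mem hi) h with ⟨h1, h2 | h2⟩ | ⟨k, rfl, h2 | h2⟩
  · left; exact H.s_inj hi h1 h2
  · exact absurd h2 (H.s_ne_e hi h1)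
  · right; rw [H.s_inj hi (by omega) h2]
  · exact absurd h2 (H.s_ne_e hi hj)

lemma map_mem (_H : Sys n s S φ) {ρ : V → V} (A : Aut0 S ρ) {x : V} (hx : x ∈ S) : ρ x ∈ S := by
  have := (A.adj x 0).2 (by simpa using hx)
  simpa [A.zero] using this

lemma fix_e (H : Sys n s S φ) {ρ : V → V} (A : Aut0 S ρ) {i : ℕ} (hi : i + 1 < n)
    (h0 : ρ (s i) = s i) (h1 : ρ (s (i + 1)) = s (i + 1)) :
    ρ (s i + s (i + 1)) = s i + s (i + 1) := by
  set y := ρ (s i + s (i + 1)) with hy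
  have ym : y ∈ S := H.map_mem A (H.e_mem hi)
  have a0 : y + s i ∈ S := by
    rw [← h0, hy, A.adj, add_comm, H.cancel]; exact H.s_mem hi
  have a1 : y + s (i + 1) ∈ S := by
    rw [← h1, hy, A.adj, add_assoc, H.h2, add_zero]; exact H.s_mem (by omega)
  rcases H.nbr_s (by omega) ym a0 with ⟨_, h2 | h2⟩ | ⟨k, rfl, h2 | h2⟩
  · rw [h2, H.h2] at a1; exact absurd a1 H.zero_notMem
  · exact h2
  · rw [h2] at a1
    have := H.ss (by omega) hi a1
    omega
  · rcases H.nbr_s hi ym a1 with ⟨h3, h4 | h4⟩ | ⟨l, hl, h4 | h4⟩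
    · rw [h4] at h2; exact absurd h2 (H.s_ne_e h3 (by omega))
    · rw [h4] at h2; have := H.e_inj h3 (by omega) h2; omega
    · rw [h4] at h2; exact absurd h2 (H.s_ne_e (by omega) (by omega))
    · rw [h4] at h2; have := H.e_inj (by omega) (by omega) h2; omega

lemma fix_next (H : Sys n s S φ) {ρ : V → V} (A : Aut0 S ρ) {i : ℕ} (hi : i + 3 < n)
    (h0 : ρ (s i) = s i) (h1 : ρ (s (i + 1)) = s (i + 1)) : ρ (s (i + 2)) = s (i + 2) := by
  have he := H.fix_e A (by omega) h0 h1
  have ym : ρ (s (i + 2)) ∈ S := H.map_mem A (H.s_mem (by omega))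
  have a1 : ρ (s (i + 2)) + s (i + 1) ∈ S := by
    rw [← h1, A.adj, add_comm]; exact H.e_mem (by omega)
  rcases H.nbr_s (by omega) ym a1 with ⟨_, h2 | h2⟩ | ⟨k, hk, h2 | h2⟩
  · exact h2
  · exfalso
    have zm : ρ (s (i + 3)) ∈ S := H.map_mem A (H.s_mem hi)
    have b : ρ (s (i + 3)) + (s (i + 1) + s (i + 1 + 1)) ∈ S := by
      rw [← h2, A.adj, add_comm]; exact H.e_mem hi
    rcases H.nbr_e (by omega) zm b with h3 | h3
    · have := H.s_inj hi (by omega) (A.inj _ _ (h3.trans h1.symm)); omega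
    · have c : ρ (s (i + 3)) + ρ (s (i + 1)) ∈ S := by
        rw [h3, h1, add_comm]; exact H.e_mem (by omega)
      rw [A.adj] at c
      have := H.ss hi (by omega) c
      omega
  · obtain rfl : k = i := by omega
    have := H.s_inj (by omega) (by omega) (A.inj _ _ (h2.trans h0.symm)); omega
  · obtain rfl : k = i := by omega
    exact absurd (A.inj _ _ (h2.trans he.symm)) (H.s_ne_e (by omega) (by omega))

lemma fix_up (H : Sys n s S φ) {ρ : V → V} (A : Aut0 S ρ) {i : ℕ} (hi : i + 1 < n)
    (h0 : ρ (s i) = s i) (h1 : ρ (s (i + 1)) = s (i + 1)) (j : ℕ) (hj : i + j + 1 < n) :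
    ρ (s (i + j)) = s (i + j) ∧ (i + j + 2 < n → ρ (s (i + j + 1)) = s (i + j + 1)) := by
  induction j with
  | zero => exact ⟨h0, fun _ => h1⟩
  | succ j ih =>
    obtain ⟨a, b⟩ := ih (by omega)
    have b := b (by omega)
    exact ⟨b, fun h => H.fix_next A (by omega) a b⟩

lemma fix_mid (H : Sys n s S φ) {ρ : V → V} (A : Aut0 S ρ) {i : ℕ} (hi : i + 1 < n)
    (h0 : ρ (s i) = s i) (h1 : ρ (s (i + 1)) = s (i + 1)) (j : ℕ) (hj0 : 0 < j)
    (hj : j + 1 < n) : ρ (s j) = s j := by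
  by_cases h : i ≤ j
  · have := (H.fix_up A hi h0 h1 (j - i) (by omega)).1
    rwa [Nat.add_sub_cancel' h] at this
  · have e0 : n - 1 - (n - 2 - i) = i + 1 := by omega
    have e1 : n - 1 - (n - 2 - i + 1) = i := by omega
    have := (H.rev.fix_up A (i := n - 2 - i) (by omega) (by simpa only [e0] using h1)
      (by simpa only [e1] using h0) (i + 1 - j) (by omega)).1
    have e2 : n - 1 - (n - 2 - i + (i + 1 - j)) = j := by omega
    simpa only [e2] using this

lemma fix_all (H : Sys n s S φ) {ρ : V → V} (A : Aut0 S ρ) {i : ℕ} (hi : i + 1 < n)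
    (h0 : ρ (s i) = s i) (h1 : ρ (s (i + 1)) = s (i + 1)) (hf : ρ (s 0) = s 0)
    (hl : ρ (s (n - 1)) = s (n - 1)) : ∀ x ∈ S, ρ x = x := by
  have key : ∀ j, j < n → ρ (s j) = s j := by
    intro j hj
    rcases Nat.eq_zero_or_pos j with rfl | h
    · exact hf
    · by_cases h' : j + 1 < n
      · exact H.fix_mid A hi h0 h1 j h h'
      · obtain rfl : j = n - 1 := by omega
        exact hl
  intro x hx
  rcases (H.mem _).1 hx with ⟨j, hj, rfl⟩ | ⟨j, hj, rfl⟩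
  · exact key j hj
  · exact H.fix_e A hj (key _ (by omega)) (key _ hj)

/-- the conjugate of `ρ` by a translation -/
lemma shift (H : Sys n s S φ) {ρ : V → V} (A : Aut0 S ρ) {u : V} (hu : ρ u = u) :
    Aut0 S (fun x => u + ρ (u + x)) where
  inj := by
    intro x y h
    exact add_left_cancel (A.inj _ _ (add_left_cancel h))
  adj := by
    intro x y
    have e : ∀ a b : V, (u + a) + (u + b) = a + b := by
      intro a b
      rw [add_add_add_comm, H.h2, zero_add]
    rw [e, A.adj, e]
  zero := by simp [hu, H.h2]

lemma shift_fix (H : Sys n s S φ) {ρ : V → V} {u x : V} :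
    u + ρ (u + x) = x ↔ ρ (u + x) = u + x := by
  constructor
  · intro h
    rw [← H.cancel u (ρ (u + x)), h]
  · intro h
    rw [h, H.cancel]

lemma shift_last (H : Sys n s S φ) {ρ : V → V} (A : Aut0 S ρ) (hf : ∀ x ∈ S, ρ x = x) :
    ∀ x ∈ S, ρ (s (n - 1) + x) = s (n - 1) + x := by
  have hn := H.hn
  obtain ⟨m, rfl⟩ : ∃ m, n = m + 4 := ⟨n - 4, by omega⟩
  have eN : m + 4 - 1 = m + 3 := by omega
  rw [eN]
  set u := s (m + 3) with hu
  have hum : u ∈ S := H.s_mem (by omega)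
  have B := H.shift A (hf u hum)
  have f3 : u + ρ (u + u) = u := by rw [H.h2, A.zero, add_zero]
  have f2 : u + ρ (u + s (m + 2)) = s (m + 2) := by
    rw [H.shift_fix]; apply hf; rw [add_comm]; exact H.e_mem (by omega)
  have mid := H.fix_mid B (i := m + 2) (by omega) f2 f3
  have m1 := mid 1 (by omega) (by omega)
  have m2 := mid 2 (by omega) (by omega)
  have e1 := H.fix_e B (i := 1) (by omega) m1 m2
  have g0 : u + ρ (u + s 0) = s 0 := by
    have ym := H.map_mem B (H.s_mem (i := 0) (by omega))
    have a1 := (B.adj (s 0) (s 1)).2 (H.e_mem (i := 0) (by omega))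
    simp only [m1] at a1
    rcases H.nbr_s (by omega) ym a1 with ⟨_, h2 | h2⟩ | ⟨k, hk, h2 | h2⟩
    · have := H.s_inj (by omega) (by omega) (B.inj _ _ (h2.trans m2.symm)); omega
    · exact absurd (B.inj _ _ (h2.trans e1.symm)) (H.s_ne_e (by omega) (by omega))
    · obtain rfl : k = 0 := by omega
      exact h2
    · exfalso
      obtain rfl : k = 0 := by omega
      have h3 : ρ (u + s 0) = u + (s 0 + s 1) := by
        rw [← H.cancel u (ρ (u + s 0))]; exact congrArg _ h2
      have c := (A.adj (u + s 0) (s 0)).2 (by rw [add_assoc, H.h2, add_zero]; exact hum)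
      rw [h3, hf (s 0) (H.s_mem (by omega))] at c
      have e : u + (s 0 + s 1) + s 0 = u + s 1 := by
        rw [add_assoc, add_comm (s 0) (s 1), add_assoc, H.h2, add_zero]
      rw [e] at c
      have := H.ss (by omega) (by omega) c
      omega
  intro x hx
  rw [← H.shift_fix]
  exact H.fix_all B (i := m + 2) (by omega) f2 f3 g0 (by rw [eN]; exact f3) x hx

lemma shift_all (H : Sys n s S φ) {ρ : V → V} (A : Aut0 S ρ) (hf : ∀ x ∈ S, ρ x = x)
    {u : V} (hum : u ∈ S) : ∀ x ∈ S, ρ (u + x) = u + x := by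
  have hn := H.hn
  have hL := H.shift_last A hf u hum
  have hF := H.rev.shift_last A hf u hum
  have e0 : n - 1 - (n - 1) = 0 := by omega
  simp only [e0] at hF
  have B := H.shift A (hf u hum)
  have g0 : u + ρ (u + s 0) = s 0 := by rw [H.shift_fix, add_comm]; exact hF
  have gl : u + ρ (u + s (n - 1)) = s (n - 1) := by rw [H.shift_fix, add_comm]; exact hL
  have fu : u + ρ (u + u) = u := by rw [H.h2, A.zero, add_zero]
  have fa : ∀ x, u + x ∈ S → u + ρ (u + x) = x := fun x hx => H.shift_fix.2 (hf _ hx)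
  have : ∃ i, i + 1 < n ∧ u + ρ (u + s i) = s i ∧ u + ρ (u + s (i + 1)) = s (i + 1) := by
    rcases (H.mem _).1 hum with ⟨j, hj, h⟩ | ⟨j, hj, h⟩
    · by_cases h' : j + 1 < n
      · refine ⟨j, h', by rw [← h]; exact fu, fa _ ?_⟩
        rw [h]; exact H.e_mem h'
      · obtain ⟨k, rfl⟩ : ∃ k, j = k + 1 := ⟨j - 1, by omega⟩
        refine ⟨k, hj, fa _ ?_, by rw [← h]; exact fu⟩
        rw [h, add_comm]; exact H.e_mem hj
    · refine ⟨j, hj, fa _ ?_, fa _ ?_⟩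
      · rw [h, add_comm, H.cancel]; exact H.s_mem hj
      · rw [h, add_assoc, H.h2, add_zero]; exact H.s_mem (by omega)
  obtain ⟨i, hi, a, b⟩ := this
  intro x hx
  rw [← H.shift_fix]
  exact H.fix_all B hi a b g0 gl x hx

lemma fix_everything (H : Sys n s S φ) (hgen : AddSubmonoid.closure S = ⊤)
    {ρ : V → V} (A : Aut0 S ρ) (hf : ∀ x ∈ S, ρ x = x) (v : V) : ρ v = v := by
  have key : ∀ v ∈ AddSubmonoid.closure S, ρ v = v ∧ ∀ x ∈ S, ρ (v + x) = v + x := by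
    intro v hv
    induction hv using AddSubmonoid.closure_induction_right with
    | zero => exact ⟨A.zero, by simpa using hf⟩
    | add_right v hv u hu ih =>
      refine ⟨ih.2 u hu, fun x hx => ?_⟩
      have B := H.shift A ih.1
      have := H.shift_all B (fun x hx => H.shift_fix.2 (ih.2 x hx)) hu x hx
      rw [H.shift_fix] at this
      rw [add_assoc]; exact this
  exact (key v (by rw [hgen]; trivial)).1

lemma main (H : Sys n s S φ) (hgen : AddSubmonoid.closure S = ⊤) (π : Equiv.Perm V)
    (hadj : ∀ x y, π x + π y ∈ S ↔ x + y ∈ S)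
    (hc : ∀ x, (π x = 0 ∨ π x = s 0 ∨ π x = s 1 ∨ π x = s (n - 1)) ↔
      (x = 0 ∨ x = s 0 ∨ x = s 1 ∨ x = s (n - 1))) (v : V) : π v = v := by
  have hn := H.hn
  have m0 : s 0 ∈ S := H.s_mem (by omega)
  have m1 : s 1 ∈ S := H.s_mem (by omega)
  have ml : s (n - 1) ∈ S := H.s_mem (by omega)
  have n0l : s 0 + s (n - 1) ∉ S := fun h => by
    have := H.ss (by omega) (by omega) h; omega
  have n1l : s 1 + s (n - 1) ∉ S := fun h => by
    have := H.ss (by omega) (by omega) h; omega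
  have a01 : s 0 + s 1 ∈ S := H.e_mem (i := 0) (by omega)
  -- preimages
  have star : ∀ y, (y = 0 ∨ y = s 0 ∨ y = s 1 ∨ y = s (n - 1)) → y ≠ π 0 → π 0 + y ∈ S := by
    intro y hy hne
    obtain ⟨x, rfl⟩ := π.surjective y
    rw [hc] at hy
    rw [hadj, zero_add]
    rcases hy with rfl | rfl | rfl | rfl
    · exact absurd rfl hne
    · exact m0
    · exact m1
    · exact ml
  have d0l : s 0 ≠ s (n - 1) := fun h => by
    have := H.s_inj (by omega) (by omega) h; omega
  have d1l : s 1 ≠ s (n - 1) := fun h => by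
    have := H.s_inj (by omega) (by omega) h; omega
  have d01 : s 0 ≠ s 1 := fun h => by
    have := H.s_inj (by omega) (by omega) h; omega
  have z : π 0 = 0 := by
    rcases (hc 0).2 (Or.inl rfl) with h | h | h | h
    · exact h
    · exact absurd (h ▸ star (s (n - 1)) (by simp) (by rw [h]; exact d0l.symm)) n0l
    · exact absurd (h ▸ star (s (n - 1)) (by simp) (by rw [h]; exact d1l.symm)) n1l
    · have := star (s 0) (by simp) (by rw [h]; exact d0l)
      rw [h, add_comm] at this
      exact absurd this n0l
  have A : Aut0 S π := ⟨fun x y h => π.injective h, hadj, z⟩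
  have nz : ∀ x ∈ S, π x ≠ 0 := fun x hx h => H.zero_notMem (h ▸ H.map_mem A hx)
  have c0 := (hc (s 0)).2 (by simp)
  have c1 := (hc (s 1)).2 (by simp)
  have cl := (hc (s (n - 1))).2 (by simp)
  have z0 := nz _ m0
  have z1 := nz _ m1
  have zl := nz _ ml
  have i01 : π (s 0) ≠ π (s 1) := fun h => d01 (π.injective h)
  have i0l : π (s 0) ≠ π (s (n - 1)) := fun h => d0l (π.injective h)
  have i1l : π (s 1) ≠ π (s (n - 1)) := fun h => d1l (π.injective h)
  have p0l : π (s 0) + π (s (n - 1)) ∉ S := by rw [hadj]; exact n0l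
  have p1l : π (s 1) + π (s (n - 1)) ∉ S := by rw [hadj]; exact n1l
  have a10 : s 1 + s 0 ∈ S := by rw [add_comm]; exact a01
  have hl : π (s (n - 1)) = s (n - 1) := by grind
  have h0 : π (s 0) = s 0 := by
    by_contra hne
    have e0 : π (s 0) = s 1 := by grind
    have e1 : π (s 1) = s 0 := by grind
    have ym := H.map_mem A (H.s_mem (i := 2) (by omega))
    have b := (hadj (s 2) (s 1)).2 (by rw [add_comm]; exact H.e_mem (i := 1) (by omega))
    rw [e1] at b
    rcases H.nbr_s (by omega) ym b with ⟨_, h2 | h2⟩ | ⟨k, hk, h2 | h2⟩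
    · have := H.s_inj (by omega) (by omega) (π.injective (h2.trans e0.symm)); omega
    · have c : π (s 2) + π (s 0) ∈ S := by
        rw [h2, e0, add_assoc, H.h2, add_zero]; exact m0
      rw [hadj] at c
      have := H.ss (by omega) (by omega) c
      omega
    · omega
    · omega
  have h1 : π (s 1) = s 1 := by grind
  exact H.fix_everything hgen A (H.fix_all A (i := 0) (by omega) h0 h1 h0 hl) v

end Sys

end AQAux

namespace AQAux

/-- bits as elements of `ZMod 2` -/
def bitEquiv : Bool ≃ ZMod 2 where
  toFun b := if b then 1 else 0
  invFun z := decide (z = 1)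
  left_inv := by decide
  right_inv := by decide

def E (n : ℕ) : (Fin n → Bool) ≃ (Fin n → ZMod 2) := Equiv.piCongrRight fun _ => bitEquiv

def sv (n : ℕ) (k : ℕ) : Fin n → ZMod 2 := fun i => if k ≤ i.1 then 1 else 0

def SS (n : ℕ) : Set (Fin n → ZMod 2) :=
  {x | (∃ i, i < n ∧ x = sv n i) ∨ (∃ i, i + 1 < n ∧ x = sv n i + sv n (i + 1))}

def co (n : ℕ) (k : ℕ) (x : Fin n → ZMod 2) : ZMod 2 := if h : k < n then x ⟨k, h⟩ else 0

def ph (n : ℕ) (k : ℕ) (x : Fin n → ZMod 2) : Bool :=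
  decide (co n k x + (if k = 0 then 0 else co n (k - 1) x) = 1)

lemma co_add (n k : ℕ) (x y : Fin n → ZMod 2) : co n k (x + y) = co n k x + co n k y := by
  unfold co
  split_ifs <;> simp

lemma bit_add : ∀ a b : ZMod 2, decide (a + b = 1) = xor (decide (a = 1)) (decide (b = 1)) := by
  decide

lemma z2 (a : ZMod 2) : a + a = 0 := by revert a; decide

lemma sys (n : ℕ) (hn : 4 ≤ n) : Sys n (sv n) (SS n) (ph n) where
  hn := hn
  h2 := by intro x; funext i; exact z2 _
  add := by
    intro l x y
    unfold ph
    rw [← bit_add]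
    congr 2
    rw [co_add]
    split_ifs
    · ring
    · rw [co_add]; ring
  hs := by
    intro l j hl hj
    have h01 : (0 : ZMod 2) ≠ 1 := by decide
    have h11 : (1 : ZMod 2) + 1 ≠ 1 := by decide
    unfold ph
    apply decide_eq_decide.2
    have hl' : l - 1 < n := by omega
    simp only [co, sv, hl, hl', dif_pos]
    by_cases a : j ≤ l <;> by_cases b : l = 0 <;> by_cases c : j ≤ l - 1 <;>
      simp [a, b, c, h01, h11] <;> first | omega | grind
  mem := fun x => Iff.rfl

lemma single_eq (n : ℕ) (l : Fin n) :
    (Pi.single l 1 : Fin n → ZMod 2) = sv n l + sv n (l + 1) := by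
  funext i
  have h11 : (1 : ZMod 2) + 1 = 0 := by decide
  simp only [Pi.single_apply, sv, Pi.add_apply]
  rcases lt_trichotomy i.1 l.1 with h | h | h
  · have : i ≠ l := fun e => by rw [e] at h; omega
    simp [this, show ¬ l.1 ≤ i.1 by omega, show ¬ l.1 + 1 ≤ i.1 by omega]
  · have : i = l := Fin.ext h
    subst this
    simp
  · have : i ≠ l := fun e => by rw [e] at h; omega
    simp only [this, show l.1 ≤ i.1 by omega, show l.1 + 1 ≤ i.1 by omega, if_true, if_false, h11]

lemma sv_top (n : ℕ) : sv n n = 0 := by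
  funext i
  simp [sv]

lemma single_mem (n : ℕ) (l : Fin n) : (Pi.single l 1 : Fin n → ZMod 2) ∈ SS n := by
  rw [single_eq]
  by_cases h : l.1 + 1 < n
  · exact Or.inr ⟨l, h, rfl⟩
  · have : l.1 + 1 = n := by omega
    rw [this, sv_top, add_zero]
    exact Or.inl ⟨l, l.2, rfl⟩

lemma gen (n : ℕ) : AddSubmonoid.closure (SS n) = ⊤ := by
  rw [eq_top_iff]
  intro x _
  rw [← Finset.univ_sum_single x]
  refine sum_mem fun i _ => ?_
  have : x i = 0 ∨ x i = 1 := by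
    generalize x i = a
    revert a; decide
  rcases this with h | h
  · rw [h, Pi.single_zero]; exact zero_mem _
  · rw [h]; exact AddSubmonoid.subset_closure (single_mem n i)

lemma bit1 : ∀ a b : Bool, bitEquiv a + bitEquiv b = if a = b then 0 else 1 := by decide

lemma adj_iff (n : ℕ) (a b : Fin n → Bool) : (AQ n).Adj a b ↔ E n a + E n b ∈ SS n := by
  have hE : E n a + E n b = fun i => if a i = b i then (0 : ZMod 2) else 1 := by
    funext i
    exact bit1 _ _
  have h01 : (0 : ZMod 2) ≠ 1 := by decide
  have h1 : ∀ l : Fin n, (a l ≠ b l ∧ ∀ i, i ≠ l → a i = b i) ↔ E n a + E n b = Pi.single l 1 := by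
    intro l
    rw [hE, funext_iff]
    constructor
    · rintro ⟨p, q⟩ i
      by_cases h : i = l
      · subst h; simp [p]
      · simp [q i h, h]
    · intro h
      refine ⟨fun e => ?_, fun i hi => ?_⟩
      · have := h l
        simp [e] at this
      · by_contra e
        have := h i
        simp [e, hi] at this
  have h2 : ∀ l : Fin n, ((∀ i, i < l → a i = b i) ∧ ∀ i, l ≤ i → a i ≠ b i) ↔
      E n a + E n b = sv n l := by
    intro l
    rw [hE, funext_iff]
    constructor
    · rintro ⟨p, q⟩ i
      by_cases h : i < l
      · simp [sv, p i h, show ¬ l.1 ≤ i.1 from not_le.2 h]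
      · have h' : l ≤ i := not_lt.1 h
        simp [sv, q i h', show l.1 ≤ i.1 from h']
    · intro h
      refine ⟨fun i hi => ?_, fun i hi e => ?_⟩
      · by_contra e
        have := h i
        simp [sv, e, show ¬ l.1 ≤ i.1 from not_le.2 hi] at this
      · have := h i
        simp [sv, e, show l.1 ≤ i.1 from hi] at this
  change ((∃ l, a l ≠ b l ∧ ∀ i, i ≠ l → a i = b i) ∨
             (∃ l, (∀ i, i < l → a i = b i) ∧ ∀ i, l ≤ i → a i ≠ b i)) ↔ _
  simp only [h1, h2]
  constructor
  · rintro (⟨l, h⟩ | ⟨l, h⟩)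
    · rw [h]; exact single_mem n l
    · rw [h]; exact Or.inl ⟨l, l.2, rfl⟩
  · rintro (⟨i, hi, h⟩ | ⟨i, hi, h⟩)
    · exact Or.inr ⟨⟨i, hi⟩, h⟩
    · refine Or.inl ⟨⟨i, by omega⟩, ?_⟩
      rw [single_eq, h]

open Classical in
/-- the distinguishing colouring -/
noncomputable def col (n : ℕ) (a : Fin n → Bool) : Fin 2 :=
  if (E n a = 0 ∨ E n a = sv n 0 ∨ E n a = sv n 1 ∨ E n a = sv n (n - 1)) then 1 else 0

lemma col_iff (n : ℕ) (a b : Fin n → Bool) (h : col n a = col n b) :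
    (E n a = 0 ∨ E n a = sv n 0 ∨ E n a = sv n 1 ∨ E n a = sv n (n - 1)) ↔
    (E n b = 0 ∨ E n b = sv n 0 ∨ E n b = sv n 1 ∨ E n b = sv n (n - 1)) := by
  unfold col at h
  split_ifs at h with p q q
  · exact iff_of_true p q
  · exact absurd h (by decide)
  · exact absurd h (by decide)
  · exact iff_of_false p q

lemma col_dist (n : ℕ) (hn : 4 ≤ n) : IsDistinguishing (AQ n) (col n) := by
  intro π hπ hc
  have key := (sys n hn).main (gen n) ((E n).permCongr π)
    (by
      intro x y
      simp only [Equiv.permCongr_apply]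
      rw [← adj_iff, hπ, adj_iff]
      simp)
    (by
      intro x
      have := col_iff n _ _ (hc ((E n).symm x))
      simpa only [Equiv.permCongr_apply, Equiv.apply_symm_apply] using this)
  ext1 a
  have := key (E n a)
  simpa using this

/-- complementing every coordinate is an automorphism -/
lemma lower (n : ℕ) (hn : 4 ≤ n) (c : (Fin n → Bool) → Fin 1) : ¬ IsDistinguishing (AQ n) c := by
  intro h
  have hinv : Function.Involutive (fun (a : Fin n → Bool) (i : Fin n) => !(a i)) := by
    intro a; funext i; simp
  have := h hinv.toPerm (by
    intro a b
    simp [AQ]) (fun v => Subsingleton.elim _ _)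
  have h2 := congrFun (congrArg (fun p : Equiv.Perm (Fin n → Bool) => p (fun _ => true)) this)
    ⟨0, by omega⟩
  simp at h2

end AQAux

theorem stmt_16 (n : ℕ) (hn : 4 ≤ n) : distNum (AQ n) = 2 := by
  unfold distNum
  apply le_antisymm
  · exact Nat.sInf_le ⟨AQAux.col n, AQAux.col_dist n hn⟩
  · refine le_csInf ⟨2, AQAux.col n, AQAux.col_dist n hn⟩ ?_
    rintro r ⟨c, hc⟩
    by_contra hlt
    have hr : r = 0 ∨ r = 1 := by omega
    rcases hr with rfl | rfl
    · exact (c fun _ => true).elim0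
    · exact AQAux.lower n hn c hc
end
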